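/- arXiv:1603.03134 — 2 statements merged into one kernel-verified Lean document; each statement's English description precedes it below -/
import Mathlib

section
/- Let \(N,d\) be positive integers with \(\gcd(d,N)=1\), and let \(u,z,v\in\mathbb{C}\) with \(\mathrm{Re}\,u>1/2\), \(\mathrm{Re}\,z>1\) and \(\mathrm{Re}\,v=0\). Then (all series converging absolutely) \(\sum_{\substack{q\geq 1\\ N\mid q}}\frac{1}{q^{2u}}\sum_{\substack{m,n\geq 1,\ \gcd(n,q)=1\\ mn\equiv d\ (\mathrm{mod}\ q)}}\frac{(m/n)^{-v}}{(mn)^{z}} \;=\; \frac{1}{N^{2u}}\sum_{r\mid d}\frac{\mu(d/r)}{(d/r)^{z+2u-v}}\Bigl(\zeta(2u)\,\frac{\tau_v(r)}{r^{z}}\;+\;\sum_{\substack{a\in\mathbb{Z},\ a\neq 0\\ a\geq (1-r)/N}}\frac{\tau_v(r+aN)\,\tau_u(|a|)}{(r+aN)^{z}\,|a|^{u}}\Bigr)\). -/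
/-- `τ_s(n) = ∑_{n₁ n₂ = n} (n₁/n₂)^s = n^{-s} σ_{2s}(n)` for complex `s` and `n ≥ 1`. -/
noncomputable def tauC (s : ℂ) (n : ℕ) : ℂ :=
  ∑ d ∈ n.divisors, (((d : ℂ)) / ((n / d : ℕ) : ℂ)) ^ s

/-- The summand of the left-hand side, indexed over triples `(q,m,n)` of positive integers
(via `+1` shifts): `q^{-2u} (m/n)^{-v} (mn)^{-z}` restricted to `N ∣ q`, `gcd(n,q) = 1` and
`mn ≡ d (mod q)`. -/
noncomputable def lhsTerm (N d : ℕ) (u z v : ℂ) (x : ℕ × ℕ × ℕ) : ℂ :=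
  if N ∣ (x.1 + 1) ∧ Nat.gcd (x.2.2 + 1) (x.1 + 1) = 1 ∧
      ((x.2.1 + 1) * (x.2.2 + 1)) % (x.1 + 1) = d % (x.1 + 1) then
    (1 / ((x.1 + 1 : ℕ) : ℂ) ^ (2 * u)) *
      ((((x.2.1 + 1 : ℕ) : ℂ)) / ((x.2.2 + 1 : ℕ) : ℂ)) ^ (-v) /
      (((x.2.1 + 1) * (x.2.2 + 1) : ℕ) : ℂ) ^ z
  else 0

/-- The summand of the inner right-hand sum, indexed over nonzero integers `a ≥ (1-r)/N`:
`τ_v(r+aN) τ_u(|a|) / ((r+aN)^z |a|^u)`. -/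
noncomputable def aTerm (N : ℕ) (u z v : ℂ) (r : ℕ) (a : ℤ) : ℂ :=
  if a ≠ 0 ∧ (1 : ℤ) - (r : ℤ) ≤ a * (N : ℤ) then
    tauC v ((r : ℤ) + a * (N : ℤ)).toNat * tauC u a.natAbs /
      ((((r : ℤ) + a * (N : ℤ) : ℤ) : ℂ)) ^ z / ((a.natAbs : ℂ)) ^ u
  else 0

lemma nat_div_cpow_aux (m n : ℕ) (s : ℂ) : ((m : ℂ) / n) ^ s = (m : ℂ) ^ s / (n : ℂ) ^ s := by
  have := Complex.div_cpow_ofReal_nonneg (a := m) (b := n) (by positivity) (by positivity) s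
  simpa using this

/-- the unrestricted summand -/
noncomputable def hW (u z v : ℂ) (x : ℕ × ℕ × ℕ) : ℂ :=
  (x.1 : ℂ) ^ (-(2 * u)) * ((x.2.1 : ℂ) ^ (-v - z) * (x.2.2 : ℂ) ^ (v - z))

lemma summable_norm_cpow_aux (s : ℂ) (hs : s.re < -1) :
    Summable fun n : ℕ => ‖(n : ℂ) ^ s‖ := by
  have : (fun n : ℕ => ‖(n : ℂ) ^ s‖) = fun n : ℕ => (n : ℝ) ^ s.re := by
    ext n
    exact Complex.norm_natCast_cpow_of_re_ne_zero n (by linarith)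
  rw [this]
  exact Real.summable_nat_rpow.2 hs

lemma zero_cpow_aux (s : ℂ) (hs : s.re < -1) : (0 : ℂ) ^ s = 0 := by
  apply Complex.zero_cpow
  rintro rfl
  simp at hs
  linarith

lemma summable_norm_pair {z v : ℂ} (hz : 1 < z.re) (hv : v.re = 0) :
    Summable fun y : ℕ × ℕ => ‖(y.1 : ℂ) ^ (-v - z) * (y.2 : ℂ) ^ (v - z)‖ :=
  Summable.mul_norm (f := fun n : ℕ => (n : ℂ) ^ (-v - z)) (g := fun n : ℕ => (n : ℂ) ^ (v - z))
    (summable_norm_cpow_aux (-v - z) (by simp; linarith))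
    (summable_norm_cpow_aux (v - z) (by simp; linarith))

lemma summable_norm_hW {u z v : ℂ} (hu : 1 / 2 < u.re) (hz : 1 < z.re) (hv : v.re = 0) :
    Summable fun x => ‖hW u z v x‖ :=
  Summable.mul_norm (f := fun n : ℕ => (n : ℂ) ^ (-(2 * u)))
    (g := fun y : ℕ × ℕ => (y.1 : ℂ) ^ (-v - z) * (y.2 : ℂ) ^ (v - z))
    (summable_norm_cpow_aux (-(2 * u)) (by simp; linarith))
    (summable_norm_pair hz hv)

lemma summable_ite_hW {u z v : ℂ} (hu : 1 / 2 < u.re) (hz : 1 < z.re) (hv : v.re = 0)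
    (P : ℕ × ℕ × ℕ → Prop) [DecidablePred P] :
    Summable fun x => if P x then hW u z v x else 0 := by
  refine Summable.of_norm_bounded (summable_norm_hW hu hz hv) fun x => ?_
  split_ifs <;> simp

lemma hW_zero1 {u z v : ℂ} (hu : 1 / 2 < u.re) (m n : ℕ) : hW u z v (0, m, n) = 0 := by
  simp only [hW, Nat.cast_zero]
  rw [zero_cpow_aux _ (by simp; linarith), zero_mul]

lemma hW_zero2 {u z v : ℂ} (hz : 1 < z.re) (hv : v.re = 0) (q n : ℕ) :
    hW u z v (q, 0, n) = 0 := by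
  simp only [hW, Nat.cast_zero]
  rw [zero_cpow_aux (-v - z) (by simp; linarith), zero_mul, mul_zero]

lemma hW_zero3 {u z v : ℂ} (hz : 1 < z.re) (hv : v.re = 0) (q m : ℕ) :
    hW u z v (q, m, 0) = 0 := by
  simp only [hW, Nat.cast_zero]
  rw [zero_cpow_aux (v - z) (by simp; linarith), mul_zero, mul_zero]

/-- moving one monomial -/
lemma mono_aux {m n : ℕ} (hm : m ≠ 0) (hn : n ≠ 0) (v z : ℂ) :
    ((m : ℂ) / n) ^ (-v) / ((m * n : ℕ) : ℂ) ^ z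
      = (m : ℂ) ^ (-v - z) * (n : ℂ) ^ (v - z) := by
  have hm' : (m : ℂ) ≠ 0 := by exact_mod_cast hm
  have hn' : (n : ℂ) ≠ 0 := by exact_mod_cast hn
  rw [nat_div_cpow_aux, Nat.cast_mul, Complex.natCast_mul_natCast_cpow,
    Complex.cpow_sub _ _ hm', Complex.cpow_sub _ _ hn', Complex.cpow_neg, Complex.cpow_neg]
  have h1 := (Complex.cpow_ne_zero_iff_of_exponent_ne_zero (x := (n : ℂ)) (y := v))
  have h2 : (n : ℂ) ^ v ≠ 0 := by simp [Complex.cpow_eq_zero_iff, hn]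
  have h3 : (m : ℂ) ^ v ≠ 0 := by simp [Complex.cpow_eq_zero_iff, hm]
  have h4 : (n : ℂ) ^ z ≠ 0 := by simp [Complex.cpow_eq_zero_iff, hn]
  have h5 : (m : ℂ) ^ z ≠ 0 := by simp [Complex.cpow_eq_zero_iff, hm]
  field_simp

lemma tauC_neg (v : ℂ) (n : ℕ) : tauC (-v) n = tauC v n := by
  unfold tauC
  rw [← Nat.sum_divisorsAntidiagonal (f := fun a b => ((a : ℂ) / (b : ℂ)) ^ (-v)),
    ← Nat.sum_divisorsAntidiagonal' (f := fun a b => ((b : ℂ) / (a : ℂ)) ^ v)]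
  refine Finset.sum_congr rfl fun x hx => ?_
  rw [nat_div_cpow_aux, nat_div_cpow_aux, Complex.cpow_neg, Complex.cpow_neg]
  rw [div_eq_mul_inv, inv_inv, mul_comm, div_eq_mul_inv]

/-- the `(m,n)` part -/
lemma tsum_B {z v : ℂ} (hz : 1 < z.re) (hv : v.re = 0) (l : ℤ) :
    ∑' y : ℕ × ℕ, (if (y.1 : ℤ) * y.2 = l then (y.1 : ℂ) ^ (-v - z) * (y.2 : ℂ) ^ (v - z) else 0)
      = if 1 ≤ l then tauC v l.toNat / (l : ℂ) ^ z else 0 := by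
  split_ifs with hl
  · obtain ⟨k, rfl⟩ : ∃ k : ℕ, l = k := ⟨l.toNat, by omega⟩
    have hk : k ≠ 0 := by omega
    rw [tsum_eq_sum (s := k.divisorsAntidiagonal)]
    · rw [Int.toNat_natCast, ← tauC_neg]
      unfold tauC
      rw [← Nat.sum_divisorsAntidiagonal (f := fun a b => ((a : ℂ) / (b : ℂ)) ^ (-v)),
        Finset.sum_div]
      refine Finset.sum_congr rfl fun x hx => ?_
      rw [Nat.mem_divisorsAntidiagonal] at hx
      rw [if_pos (by exact_mod_cast hx.1), ← mono_aux, hx.1]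
      · simp
      · rintro h; simp [h] at hx; omega
      · rintro h; simp [h] at hx; omega
    · intro y hy
      rw [if_neg]
      intro h
      exact hy (Nat.mem_divisorsAntidiagonal.2 ⟨by exact_mod_cast h, hk⟩)
  · convert tsum_zero with y
    split_ifs with h
    · have : y.1 = 0 ∨ y.2 = 0 := by
        by_contra! hc
        have : 0 < (y.1 : ℤ) * y.2 := by
          have := Nat.pos_of_ne_zero hc.1
          have := Nat.pos_of_ne_zero hc.2
          positivity
        omega
      rcases this with h | h <;> rw [h, Nat.cast_zero]
      · rw [zero_cpow_aux (-v - z) (by simp; linarith), zero_mul]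
      · rw [zero_cpow_aux (v - z) (by simp; linarith), mul_zero]
    · rfl

lemma tsum_A0 {u : ℂ} (hu : 1 / 2 < u.re) :
    ∑' k : ℕ, (if (k : ℤ) ∣ 0 then (k : ℂ) ^ (-(2 * u)) else 0) = riemannZeta (2 * u) := by
  rw [zeta_eq_tsum_one_div_nat_cpow (by simp; linarith)]
  simp [Complex.cpow_neg]

lemma tsum_A {u : ℂ} {a : ℤ} (ha : a ≠ 0) :
    ∑' k : ℕ, (if (k : ℤ) ∣ a then (k : ℂ) ^ (-(2 * u)) else 0)
      = tauC u a.natAbs / (a.natAbs : ℂ) ^ u := by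
  have ha' : a.natAbs ≠ 0 := by simpa using ha
  rw [tsum_eq_sum (s := a.natAbs.divisors)]
  · unfold tauC
    rw [← Nat.sum_divisorsAntidiagonal (f := fun a b => ((a : ℂ) / (b : ℂ)) ^ u), Finset.sum_div]
    rw [← Nat.sum_divisorsAntidiagonal'
      (f := fun x y => if (y : ℤ) ∣ a then (y : ℂ) ^ (-(2 * u)) else 0)]
    refine Finset.sum_congr rfl fun x hx => ?_
    rw [Nat.mem_divisorsAntidiagonal] at hx
    rw [if_pos (by rw [Int.natCast_dvd, ← hx.1]; exact dvd_mul_left _ _)]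
    have h1 : x.1 ≠ 0 := by rintro h; simp [h] at hx; omega
    have h2 : x.2 ≠ 0 := by rintro h; simp [h] at hx; omega
    have h2' : (x.2 : ℂ) ≠ 0 := by exact_mod_cast h2
    rw [← hx.1, Nat.cast_mul, Complex.natCast_mul_natCast_cpow, nat_div_cpow_aux, Complex.cpow_neg,
      two_mul, Complex.cpow_add _ _ h2']
    have h4 : (x.2 : ℂ) ^ u ≠ 0 := by simp [Complex.cpow_eq_zero_iff, h2]
    have h5 : (x.1 : ℂ) ^ u ≠ 0 := by simp [Complex.cpow_eq_zero_iff, h1]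
    field_simp
  · intro y hy
    rw [if_neg]
    intro h
    exact hy (Nat.mem_divisors.2 ⟨Int.natCast_dvd.1 h, ha'⟩)

lemma HasSum.congr_fun_aux {f g : ℤ → ℂ} {s : ℂ} (h : HasSum f s) (hfg : ∀ a, g a = f a) :
    HasSum g s := by
  rw [funext hfg]
  exact h

/-- fibre sums -/
lemma hasSum_fiber {N : ℕ} (hN : 0 < N) {u z v : ℂ} (hu : 1 / 2 < u.re) (hz : 1 < z.re)
    (hv : v.re = 0) (r : ℕ) :
    HasSum (fun a : ℤ =>
      (∑' k : ℕ, (if (k : ℤ) ∣ a then (k : ℂ) ^ (-(2 * u)) else 0)) *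
        (if 1 ≤ (r : ℤ) + a * N then
          tauC v ((r : ℤ) + a * N).toNat / (((r : ℤ) + a * N : ℤ) : ℂ) ^ z else 0))
      (∑' x : ℕ × ℕ × ℕ, if ((N : ℤ) * x.1) ∣ (x.2.1 : ℤ) * x.2.2 - r then hW u z v x else 0) := by
  have h := (summable_ite_hW hu hz hv
    (fun x => ((N : ℤ) * x.1) ∣ (x.2.1 : ℤ) * x.2.2 - r)).hasSum.tsum_fiberwise
      (fun x => ((x.2.1 : ℤ) * x.2.2 - r) / N)
  refine h.congr_fun_aux ?_
  intro a
  rw [tsum_subtype _ (fun x : ℕ × ℕ × ℕ =>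
    if ((N : ℤ) * x.1) ∣ (x.2.1 : ℤ) * x.2.2 - r then hW u z v x else 0), ← tsum_B hz hv,
    tsum_mul_tsum_of_summable_norm]
  · refine tsum_congr fun x => ?_
    have hN' : (N : ℤ) ≠ 0 := by omega
    have key : ((x.1 : ℤ) ∣ a ∧ (x.2.1 : ℤ) * x.2.2 = r + a * N) ↔
        (((x.2.1 : ℤ) * x.2.2 - r) / N = a ∧ ((N : ℤ) * x.1) ∣ (x.2.1 : ℤ) * x.2.2 - r) := by
      constructor
      · rintro ⟨h1, h2⟩
        have : (x.2.1 : ℤ) * x.2.2 - r = N * a := by rw [h2]; ring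
        rw [this]
        exact ⟨Int.mul_ediv_cancel_left _ hN', mul_dvd_mul_left _ h1⟩
      · rintro ⟨h1, c, hc⟩
        rw [hc, mul_assoc, Int.mul_ediv_cancel_left _ hN'] at h1
        refine ⟨⟨c, h1.symm⟩, ?_⟩
        rw [← h1]
        linarith
    classical
    rw [Set.indicator_apply, ← ite_and, ite_zero_mul_ite_zero]
    exact if_congr key rfl rfl
  · refine Summable.of_norm_bounded (summable_norm_cpow_aux (-(2 * u)) (by simp; linarith))
      fun x => ?_
    split_ifs <;> simp
  · refine Summable.of_norm_bounded (summable_norm_pair hz hv) fun x => ?_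
    split_ifs
    · simp
    · simp
      positivity

lemma aTerm_eq {N : ℕ} (u z v : ℂ) (r : ℕ) {a : ℤ} (ha : a ≠ 0) :
    (∑' k : ℕ, (if (k : ℤ) ∣ a then (k : ℂ) ^ (-(2 * u)) else 0)) *
        (if 1 ≤ (r : ℤ) + a * N then
          tauC v ((r : ℤ) + a * N).toNat / (((r : ℤ) + a * N : ℤ) : ℂ) ^ z else 0)
      = aTerm N u z v r a := by
  rw [tsum_A ha, aTerm]
  by_cases h : 1 ≤ (r : ℤ) + a * N
  · rw [if_pos h, if_pos ⟨ha, by linarith⟩]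
    ring
  · rw [if_neg h, if_neg (by rintro ⟨_, h'⟩; exact h (by linarith)), mul_zero]

lemma hasSum_aTerm {N : ℕ} (hN : 0 < N) {u z v : ℂ} (hu : 1 / 2 < u.re) (hz : 1 < z.re)
    (hv : v.re = 0) {r : ℕ} (hr : 0 < r) :
    HasSum (aTerm N u z v r)
      ((∑' x : ℕ × ℕ × ℕ, if ((N : ℤ) * x.1) ∣ (x.2.1 : ℤ) * x.2.2 - r then hW u z v x else 0)
        - riemannZeta (2 * u) * tauC v r / (r : ℂ) ^ z) := by
  have h := (hasSum_fiber hN hu hz hv r).update 0 0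
  have hval : ((0 : ℂ) - (∑' k : ℕ, (if (k : ℤ) ∣ 0 then (k : ℂ) ^ (-(2 * u)) else 0)) *
        (if 1 ≤ (r : ℤ) + 0 * N then
          tauC v ((r : ℤ) + 0 * N).toNat / (((r : ℤ) + 0 * N : ℤ) : ℂ) ^ z else 0)) +
      (∑' x : ℕ × ℕ × ℕ, if ((N : ℤ) * x.1) ∣ (x.2.1 : ℤ) * x.2.2 - r then hW u z v x else 0)
      = (∑' x : ℕ × ℕ × ℕ, if ((N : ℤ) * x.1) ∣ (x.2.1 : ℤ) * x.2.2 - r then hW u z v x else 0)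
        - riemannZeta (2 * u) * tauC v r / (r : ℂ) ^ z := by
    rw [tsum_A0 hu, if_pos (by omega), zero_mul, add_zero, Int.toNat_natCast, Int.cast_natCast]
    ring
  rw [hval] at h
  refine h.congr_fun_aux ?_
  · intro a
    by_cases ha : a = 0
    · subst ha
      simp [aTerm]
    · rw [Function.update_of_ne ha, aTerm_eq _ _ _ _ ha]

lemma sum_moebius_aux (n : ℕ) :
    ∑ e ∈ n.divisors, ArithmeticFunction.moebius e = if n = 1 then 1 else 0 := by
  rw [← ArithmeticFunction.coe_mul_zeta_apply, ArithmeticFunction.moebius_mul_coe_zeta,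
    ArithmeticFunction.one_apply]

lemma scaled_tsum {N d e : ℕ} (hN : 0 < N) (he : 0 < e) (hdN : Nat.gcd d N = 1) {r : ℕ}
    (hder : d = e * r) {u z v : ℂ} :
    ∑' x : ℕ × ℕ × ℕ, (if ((N ∣ x.1) ∧ (x.2.1 * x.2.2) ≡ d [MOD x.1]) ∧ e ∣ x.2.2 ∧ e ∣ x.1 then
        hW u z v x else 0)
      = 1 / (N : ℂ) ^ (2 * u) * (1 / (e : ℂ) ^ (z + 2 * u - v) *
        ∑' x : ℕ × ℕ × ℕ, if ((N : ℤ) * x.1) ∣ (x.2.1 : ℤ) * x.2.2 - r then hW u z v x else 0) := by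
  have hinj : Function.Injective (fun x : ℕ × ℕ × ℕ => (N * e * x.1, x.2.1, e * x.2.2)) := by
    rintro ⟨a, b, c⟩ ⟨a', b', c'⟩ h
    simp only [Prod.mk.injEq] at h ⊢
    refine ⟨Nat.eq_of_mul_eq_mul_left (by positivity) h.1, h.2.1,
      Nat.eq_of_mul_eq_mul_left he h.2.2⟩
  rw [← hinj.tsum_eq, ← tsum_mul_left, ← tsum_mul_left]
  · refine tsum_congr fun x => ?_
    have key : (((N ∣ N * e * x.1) ∧ (x.2.1 * (e * x.2.2)) ≡ d [MOD N * e * x.1]) ∧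
        e ∣ e * x.2.2 ∧ e ∣ N * e * x.1) ↔ ((N : ℤ) * x.1) ∣ (x.2.1 : ℤ) * x.2.2 - r := by
      have h1 : N ∣ N * e * x.1 := ⟨e * x.1, by ring⟩
      have h2 : e ∣ N * e * x.1 := ⟨N * x.1, by ring⟩
      have h3 : e ∣ e * x.2.2 := ⟨_, rfl⟩
      simp only [h1, h2, h3, true_and, and_true]
      rw [Nat.ModEq.comm, Nat.modEq_iff_dvd, hder]
      push_cast
      rw [show (N : ℤ) * e * x.1 = e * (N * x.1) by ring,
        show (x.2.1 : ℤ) * (e * x.2.2) - e * r = e * (x.2.1 * x.2.2 - r) by ring]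
      exact mul_dvd_mul_iff_left (by exact_mod_cast he.ne')
    rw [if_congr key rfl rfl]
    split_ifs
    · simp only [hW]
      have he' : (e : ℂ) ≠ 0 := by exact_mod_cast he.ne'
      rw [Nat.cast_mul, Complex.natCast_mul_natCast_cpow, Nat.cast_mul,
        Complex.natCast_mul_natCast_cpow, Nat.cast_mul, Complex.natCast_mul_natCast_cpow,
        one_div, one_div, ← Complex.cpow_neg, ← Complex.cpow_neg,
        show -(z + 2 * u - v) = -(2 * u) + (v - z) by ring, Complex.cpow_add _ _ he']
      ring
    · simp
  · rintro ⟨q, m, n⟩ hx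
    rw [Function.mem_support] at hx
    have hx := (ite_ne_right_iff.1 hx).1
    obtain ⟨⟨h1, h2⟩, h3, h4⟩ := hx
    have hcop : Nat.Coprime N e := by
      refine Nat.Coprime.coprime_dvd_right ⟨r, hder⟩ ?_
      rwa [Nat.coprime_comm]
    obtain ⟨k, hk⟩ := hcop.mul_dvd_of_dvd_of_dvd h1 h4
    obtain ⟨n', hn'⟩ := h3
    exact ⟨(k, m, n'), by simp only at hk hn' ⊢; rw [hk, hn']⟩

lemma tsum_lhs_aux {N d : ℕ} (hN : 0 < N) (hd : 0 < d) (hdN : Nat.gcd d N = 1)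
    {u z v : ℂ} (hu : 1 / 2 < u.re) (hz : 1 < z.re) (hv : v.re = 0) :
    ∑' x : ℕ × ℕ × ℕ, (if N ∣ x.1 ∧ Nat.gcd x.2.2 x.1 = 1 ∧
        (x.2.1 * x.2.2) % x.1 = d % x.1 then hW u z v x else 0)
      = ∑ e ∈ d.divisors, ((ArithmeticFunction.moebius e : ℤ) : ℂ) *
        ∑' x : ℕ × ℕ × ℕ, (if ((N ∣ x.1) ∧ (x.2.1 * x.2.2) ≡ d [MOD x.1]) ∧ e ∣ x.2.2 ∧ e ∣ x.1 then
        hW u z v x else 0) := by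
  simp_rw [← tsum_mul_left]
  rw [← Summable.tsum_finsetSum]
  · refine tsum_congr ?_
    rintro ⟨q, m, n⟩
    dsimp only
    by_cases hq : q = 0
    · subst hq
      simp [hW_zero1 hu]
    by_cases hP : (N ∣ q) ∧ (m * n) ≡ d [MOD q]
    · have e1 : (N ∣ q ∧ n.gcd q = 1 ∧ m * n % q = d % q) ↔ n.gcd q = 1 :=
        ⟨fun h => h.2.1, fun h => ⟨hP.1, h, hP.2⟩⟩
      rw [if_congr e1 rfl rfl]
      simp only [hP, true_and]
      have hg : n.gcd q ∣ d := by
        have h1 : n.gcd q ∣ m * n := (Nat.gcd_dvd_left n q).mul_left m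
        have := (hP.2.of_dvd (Nat.gcd_dvd_right n q))
        exact (Nat.ModEq.dvd_iff this dvd_rfl).1 h1
      have hg0 : n.gcd q ≠ 0 := by
        intro h
        rw [h] at hg
        have := Nat.eq_zero_of_zero_dvd hg
        omega
      have h2 : ∑ e ∈ d.divisors, ((ArithmeticFunction.moebius e : ℤ) : ℂ) *
          (if e ∣ n ∧ e ∣ q then hW u z v (q, m, n) else 0)
          = ∑ e ∈ (n.gcd q).divisors,
            ((ArithmeticFunction.moebius e : ℤ) : ℂ) * hW u z v (q, m, n) := by
        symm
        rw [← Nat.divisors_filter_dvd_of_dvd hd.ne' hg, Finset.sum_filter]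
        refine Finset.sum_congr rfl fun e _ => ?_
        simp only [Nat.dvd_gcd_iff, mul_ite, mul_zero]
      rw [h2, ← Finset.sum_mul, ← Int.cast_sum, sum_moebius_aux]
      split_ifs <;> simp
    · rw [if_neg (fun h => hP ⟨h.1, h.2.2⟩)]
      symm
      refine Finset.sum_eq_zero fun e _ => ?_
      rw [if_neg (fun h => hP h.1), mul_zero]
  · intro e _
    exact (summable_ite_hW hu hz hv _).mul_left _

lemma lhs_conv (N d : ℕ) {u z v : ℂ} (hu : 1 / 2 < u.re) (hz : 1 < z.re) (hv : v.re = 0) :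
    Summable (lhsTerm N d u z v) ∧ ∑' x, lhsTerm N d u z v x =
      ∑' x : ℕ × ℕ × ℕ, (if N ∣ x.1 ∧ Nat.gcd x.2.2 x.1 = 1 ∧
        (x.2.1 * x.2.2) % x.1 = d % x.1 then hW u z v x else 0) := by
  have hinj : Function.Injective (fun x : ℕ × ℕ × ℕ => (x.1 + 1, x.2.1 + 1, x.2.2 + 1)) := by
    rintro ⟨a, b, c⟩ ⟨a', b', c'⟩ h
    simpa using h
  have heq : lhsTerm N d u z v = (fun x : ℕ × ℕ × ℕ => if N ∣ x.1 ∧ Nat.gcd x.2.2 x.1 = 1 ∧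
        (x.2.1 * x.2.2) % x.1 = d % x.1 then hW u z v x else 0) ∘
        (fun x : ℕ × ℕ × ℕ => (x.1 + 1, x.2.1 + 1, x.2.2 + 1)) := by
    ext x
    simp only [lhsTerm, Function.comp]
    split_ifs
    · rw [mul_div_assoc, mono_aux (Nat.succ_ne_zero _) (Nat.succ_ne_zero _), hW, one_div,
        ← Complex.cpow_neg]
    · rfl
  constructor
  · rw [heq]
    exact (summable_ite_hW hu hz hv _).comp_injective hinj
  · rw [heq]
    refine hinj.tsum_eq (f := fun x : ℕ × ℕ × ℕ => if N ∣ x.1 ∧ Nat.gcd x.2.2 x.1 = 1 ∧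
        (x.2.1 * x.2.2) % x.1 = d % x.1 then hW u z v x else 0) ?_
    rintro ⟨q, m, n⟩ hx
    rw [Function.mem_support] at hx
    have hx := (ite_ne_right_iff.1 hx).2
    rcases q with _ | q
    · exact absurd (hW_zero1 hu _ _) hx
    rcases m with _ | m
    · exact absurd (hW_zero2 hz hv _ _) hx
    rcases n with _ | n
    · exact absurd (hW_zero3 hz hv _ _) hx
    exact ⟨(q, m, n), rfl⟩

/-- Let `gcd(d,N) = 1`, `Re u > 1/2`, `Re z > 1`, `Re v = 0`.  Then (all series converging
absolutely)
`∑_{N ∣ q} q^{-2u} ∑_{mn ≡ d (q), (n,q)=1} (m/n)^{-v} (mn)^{-z}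
  = N^{-2u} ∑_{r ∣ d} μ(d/r) (d/r)^{-(z+2u-v)}
      ( ζ(2u) τ_v(r) r^{-z} + ∑_{a ≠ 0, a ≥ (1-r)/N} τ_v(r+aN) τ_u(|a|) (r+aN)^{-z} |a|^{-u} )`. -/
theorem lhs_sum_evaluation (N d : ℕ) (hN : 0 < N) (hd : 0 < d) (hdN : Nat.gcd d N = 1)
    (u z v : ℂ) (hu : 1 / 2 < u.re) (hz : 1 < z.re) (hv : v.re = 0) :
    Summable (lhsTerm N d u z v) ∧
    (∀ r ∈ d.divisors, Summable (aTerm N u z v r)) ∧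
    ∑' x : ℕ × ℕ × ℕ, lhsTerm N d u z v x
      = (1 / ((N : ℂ)) ^ (2 * u)) *
          ∑ r ∈ d.divisors,
            ((ArithmeticFunction.moebius (d / r) : ℤ) : ℂ) /
                (((d / r : ℕ) : ℂ)) ^ (z + 2 * u - v) *
              (riemannZeta (2 * u) * tauC v r / ((r : ℂ)) ^ z +
                ∑' a : ℤ, aTerm N u z v r a) := by
  obtain ⟨hs, ht⟩ := lhs_conv N d hu hz hv
  have hr0 : ∀ r ∈ d.divisors, 0 < r := fun r hr => Nat.pos_of_mem_divisors hr
  refine ⟨hs, fun r hr => (hasSum_aTerm hN hu hz hv (hr0 r hr)).summable, ?_⟩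
  rw [ht, tsum_lhs_aux hN hd hdN hu hz hv, ← Nat.sum_div_divisors, Finset.mul_sum]
  refine Finset.sum_congr rfl fun r hr => ?_
  have hdr : d = d / r * r := (Nat.div_mul_cancel (Nat.dvd_of_mem_divisors hr)).symm
  have he : 0 < d / r := Nat.div_pos (Nat.divisor_le hr) (hr0 r hr)
  rw [scaled_tsum hN he hdN hdr, (hasSum_aTerm hN hu hz hv (hr0 r hr)).tsum_eq]
  ring
end

section
/- For every \(\varepsilon>0\) there is a constant \(C_{\varepsilon}>0\) such that for all integers \(k\geq 2\), \(N\geq 1\), \(r\geq 1\) and all real \(t\) (write \(T=3+|t|\), \(n_0=\lfloor (r+1)/N\rfloor+1\)), the absolutely convergent sum \(V_{N,1}(r)=\cosh(\pi t)\,r^{k-it}\sum_{n\geq n_0}\frac{\tau_0(n)\,\tau_{it}(nN-r)}{(nN-r)^{k}}\,\mathcal{H}_k\Bigl(\frac{r}{nN-r}\Bigr)\) satisfies: \(|V_{N,1}(r)|\leq C_{\varepsilon}\,(rkT^2)^{\varepsilon}\,(k+T)\,\frac{r}{N}\) if \(r\geq N/(1+T^2)\), and \(|V_{N,1}(r)|\leq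 C_{\varepsilon}\,\Bigl(\frac{rT^2}{4(N-r)}\Bigr)^{k}\frac{N^{\varepsilon}}{T}\) if \(r< N/(1+T^2)\). -/
open MeasureTheory

/-- The integrand of the Mellin–Barnes integral for `𝓗_k(w)` on the line `Re s = c`:
`τ ↦ Γ(k+it+c+iτ) Γ(k-it+c+iτ) Γ(-(c+iτ)) / Γ(2k+c+iτ) · w^{c+iτ}`. -/
noncomputable def mbIntegrand (k : ℕ) (t c w : ℝ) (τ : ℝ) : ℂ :=
  Complex.Gamma ((k : ℂ) + t * Complex.I + c + τ * Complex.I) *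
    Complex.Gamma ((k : ℂ) - t * Complex.I + c + τ * Complex.I) *
    Complex.Gamma (-((c : ℂ) + τ * Complex.I)) /
    Complex.Gamma (2 * (k : ℂ) + c + τ * Complex.I) *
    Complex.exp (((c : ℂ) + τ * Complex.I) * Real.log w)

/-- `𝓗_k(w) = (1/2π) ∫_ℝ Γ(k+it+c+iτ)Γ(k-it+c+iτ)Γ(-(c+iτ))/Γ(2k+c+iτ) w^{c+iτ} dτ`,
the Mellin–Barnes integral over the vertical line `Re s = c` (for `c ∈ (-k,0)` the value is
independent of `c` and equals the analytic continuation of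
`Γ(k+it)Γ(k-it)/Γ(2k) ₂F₁(k+it,k-it,2k;-w)`). -/
noncomputable def Hmb (k : ℕ) (t c w : ℝ) : ℂ :=
  (1 / (2 * Real.pi) : ℂ) * ∫ τ : ℝ, mbIntegrand k t c w τ

/-- The summand of `V_{N,1}(r)`: for `n ≥ n₀ = ⌊(r+1)/N⌋ + 1`,
`τ₀(n) τ_{it}(nN-r)/(nN-r)^k 𝓗_k(r/(nN-r))`, and `0` otherwise. -/
noncomputable def V1term (k N r : ℕ) (t c : ℝ) (n : ℕ) : ℂ :=
  if (r + 1) / N + 1 ≤ n then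
    ((n.divisors.card : ℂ)) * tauC (t * Complex.I) (n * N - r) /
        (((n * N - r : ℕ) : ℂ)) ^ (k : ℂ) *
      Hmb k t c ((r : ℝ) / ((n * N - r : ℕ) : ℝ))
  else 0

/-- `V_{N,1}(r) = cosh(πt) r^{k-it} ∑_{n ≥ n₀} τ₀(n) τ_{it}(nN-r)/(nN-r)^k 𝓗_k(r/(nN-r))`. -/
noncomputable def V1 (k N r : ℕ) (t c : ℝ) : ℂ :=
  (Real.cosh (Real.pi * t) : ℂ) * ((r : ℂ)) ^ ((k : ℂ) - t * Complex.I) *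
    ∑' n : ℕ, V1term k N r t c n


/-! ### Gamma function lemmas -/

theorem aux_gammaSeq_norm (a y : ℝ) (n : ℕ) (hn : 0 < n) :
    ‖Complex.GammaSeq ((a : ℂ) + y * Complex.I) n‖ =
      (n : ℝ) ^ a * n.factorial /
        ∏ j ∈ Finset.range (n + 1), ‖(((a + j : ℝ) : ℂ) + y * Complex.I)‖ := by
  unfold Complex.GammaSeq
  rw [norm_div, norm_mul, norm_prod, Complex.norm_natCast_cpow_of_pos hn]
  simp only [Complex.norm_natCast]
  congr 1
  · simp
  · refine Finset.prod_congr rfl fun j _ => ?_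
    congr 1
    push_cast
    ring

theorem aux_norm_mono {A B y : ℝ} (hA : 0 < A) (hAB : A ≤ B) :
    A * ‖((B : ℂ) + y * Complex.I)‖ ≤ ‖((A : ℂ) + y * Complex.I)‖ * B := by
  rw [Complex.norm_add_mul_I, Complex.norm_add_mul_I]
  have hB : 0 < B := by linarith
  refine (fun h h0 => (pow_le_pow_iff_left₀ (by positivity) h0 two_ne_zero).1 h) ?_ (by positivity)
  rw [mul_pow, mul_pow, Real.sq_sqrt (by positivity), Real.sq_sqrt (by positivity)]
  nlinarith [mul_nonneg (sq_nonneg y) (sub_nonneg.2 (pow_le_pow_left₀ hA.le hAB 2))]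

theorem aux_gamma_mono {a b : ℝ} (y : ℝ) (ha : 0 < a) (hab : a ≤ b) :
    ‖Complex.Gamma ((a : ℂ) + y * Complex.I)‖ * Real.Gamma b ≤
      Real.Gamma a * ‖Complex.Gamma ((b : ℂ) + y * Complex.I)‖ := by
  have h1 := ((Complex.GammaSeq_tendsto_Gamma ((a : ℂ) + y * Complex.I)).norm).mul
    (Real.GammaSeq_tendsto_Gamma b)
  have h2 := (Real.GammaSeq_tendsto_Gamma a).mul
    ((Complex.GammaSeq_tendsto_Gamma ((b : ℂ) + y * Complex.I)).norm)
  refine le_of_tendsto_of_tendsto h1 h2 ?_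
  filter_upwards [Filter.eventually_gt_atTop 0] with n hn
  rw [aux_gammaSeq_norm a y n hn, aux_gammaSeq_norm b y n hn]
  unfold Real.GammaSeq
  have hb : 0 < b := by linarith
  rw [div_mul_div_comm, div_mul_div_comm, ← Finset.prod_mul_distrib, ← Finset.prod_mul_distrib]
  have hpos : ∀ (x : ℝ), 0 < x → ∀ j : ℕ, 0 < ‖(((x + j : ℝ) : ℂ) + y * Complex.I)‖ := by
    intro x hx j
    rw [norm_pos_iff]
    intro h
    have := congrArg Complex.re h
    simp at this
    have : (0:ℝ) ≤ j := Nat.cast_nonneg j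
    linarith
  refine div_le_div₀ (by positivity) (by ring_nf; rfl) ?_ ?_
  · refine Finset.prod_pos fun j _ => mul_pos (by positivity) (hpos b hb j)
  · refine Finset.prod_le_prod (fun j _ => mul_nonneg (by positivity) (norm_nonneg _)) ?_
    intro j _
    exact aux_norm_mono (by positivity) (by linarith)

theorem aux_gamma_le {a : ℝ} (y : ℝ) (ha : 0 < a) :
    ‖Complex.Gamma ((a : ℂ) + y * Complex.I)‖ ≤ Real.Gamma a := by
  have h1 := ((Complex.GammaSeq_tendsto_Gamma ((a : ℂ) + y * Complex.I)).norm)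
  have h2 := (Real.GammaSeq_tendsto_Gamma a)
  refine le_of_tendsto_of_tendsto h1 h2 ?_
  filter_upwards [Filter.eventually_gt_atTop 0] with n hn
  rw [aux_gammaSeq_norm a y n hn]
  unfold Real.GammaSeq
  refine div_le_div₀ (by positivity) (by rfl) ?_ ?_
  · refine Finset.prod_pos fun j _ => by positivity
  · refine Finset.prod_le_prod (fun j _ => by positivity) ?_
    intro j _
    have := Complex.abs_re_le_norm (((a + j : ℝ) : ℂ) + y * Complex.I)
    simp only [Complex.add_re, Complex.ofReal_re, Complex.mul_re, Complex.I_re, Complex.I_im,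
      Complex.ofReal_im] at this
    exact le_trans (le_trans (by simp) (le_abs_self _)) this

theorem aux_gamma_neg (a y : ℝ) :
    ‖Complex.Gamma ((a : ℂ) - y * Complex.I)‖ = ‖Complex.Gamma ((a : ℂ) + y * Complex.I)‖ := by
  have : (a : ℂ) - y * Complex.I = (starRingEnd ℂ) ((a : ℂ) + y * Complex.I) := by
    simp [sub_eq_add_neg]
  rw [this, Complex.Gamma_conj, Complex.norm_conj]

theorem aux_gamma_step {a y : ℝ} (ha : 0 < a) :
    ‖Complex.Gamma (((a + 1 : ℝ) : ℂ) + y * Complex.I)‖ =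
      ‖((a : ℂ) + y * Complex.I)‖ * ‖Complex.Gamma ((a : ℂ) + y * Complex.I)‖ := by
  have h0 : (a : ℂ) + y * Complex.I ≠ 0 := by
    intro h
    have := congrArg Complex.re h
    simp at this
    linarith
  rw [← norm_mul, ← Complex.Gamma_add_one _ h0]
  congr 2
  push_cast
  ring

theorem aux_gamma_pos {a : ℝ} (y : ℝ) (ha : 0 < a) :
    0 < ‖Complex.Gamma ((a : ℂ) + y * Complex.I)‖ := by
  rw [norm_pos_iff]
  exact Complex.Gamma_ne_zero_of_re_pos (by simpa using ha)

theorem aux_gamma_half (y : ℝ) :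
    ‖Complex.Gamma (((1 / 2 : ℝ) : ℂ) + y * Complex.I)‖ ^ 2 ≤
      2 * Real.pi * Real.exp (-(Real.pi * |y|)) := by
  have h := Complex.Gamma_mul_Gamma_one_sub (((1 / 2 : ℝ) : ℂ) + y * Complex.I)
  have e1 : (1 : ℂ) - (((1 / 2 : ℝ) : ℂ) + y * Complex.I) = ((1 / 2 : ℝ) : ℂ) - y * Complex.I := by
    push_cast; ring
  rw [e1] at h
  have h2 := congrArg norm h
  rw [norm_mul, aux_gamma_neg, norm_div] at h2
  have e2 : Complex.sin (Real.pi * (((1 / 2 : ℝ) : ℂ) + y * Complex.I)) =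
      ((Real.cosh (Real.pi * y) : ℝ) : ℂ) := by
    have : (Real.pi : ℂ) * (((1 / 2 : ℝ) : ℂ) + y * Complex.I) =
      ((Real.pi * y : ℝ) : ℂ) * Complex.I + (Real.pi : ℂ) / 2 := by push_cast; ring
    rw [this, Complex.sin_add_pi_div_two, Complex.cos_mul_I, Complex.ofReal_cosh]
  rw [e2, Complex.norm_real, Complex.norm_real, Real.norm_of_nonneg Real.pi_pos.le,
    Real.norm_of_nonneg (Real.cosh_pos _).le] at h2
  rw [sq, h2, div_le_iff₀ (Real.cosh_pos _)]
  have h3 : Real.exp (Real.pi * |y|) ≤ 2 * Real.cosh (Real.pi * y) := by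
    rw [← Real.cosh_abs, abs_mul, abs_of_pos Real.pi_pos, Real.cosh_eq]
    have := Real.exp_pos (-(Real.pi * |y|))
    linarith
  have h4 : Real.exp (-(Real.pi * |y|)) * Real.exp (Real.pi * |y|) = 1 := by
    rw [← Real.exp_add]; simp
  have h5 := mul_le_mul_of_nonneg_left h3 (Real.exp_pos (-(Real.pi * |y|))).le
  rw [h4] at h5
  nlinarith [Real.pi_pos]

theorem aux_x_sinh {x : ℝ} (hx : 0 < x) : x / Real.sinh x ≤ (1 + 2 * x) * Real.exp (-x) := by
  rw [div_le_iff₀ (Real.sinh_pos_iff.2 hx), Real.sinh_eq]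
  have h1 := Real.add_one_le_exp (2 * x)
  have h2 : Real.exp (-x) * Real.exp x = 1 := by rw [← Real.exp_add]; simp
  have h3 : Real.exp (-x) * Real.exp (-x) * Real.exp (2 * x) = 1 := by
    rw [← Real.exp_add, ← Real.exp_add]; ring_nf; simp
  have h4 : 0 < Real.exp (-x) * Real.exp (-x) := by positivity
  have h5 := mul_le_mul_of_nonneg_left h1 h4.le
  rw [h3] at h5
  have : (1 + 2 * x) * Real.exp (-x) * ((Real.exp x - Real.exp (-x)) / 2) =
    (1 + 2 * x) * (Real.exp (-x) * Real.exp x - Real.exp (-x) * Real.exp (-x)) / 2 := by ring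
  rw [this, h2]
  nlinarith

theorem aux_gamma_one (y : ℝ) :
    ‖Complex.Gamma (((1 : ℝ) : ℂ) + y * Complex.I)‖ ^ 2 ≤
      (8 * (1 + |y|)) * Real.exp (-(Real.pi * |y|)) := by
  rcases eq_or_ne y 0 with rfl | hy
  · simp
  have h := Complex.Gamma_mul_Gamma_one_sub ((y : ℂ) * Complex.I)
  have h0 : (y : ℂ) * Complex.I ≠ 0 := by simp [hy]
  have h2 := congrArg norm h
  have e1 : (1 : ℂ) - (y * Complex.I) = ((1 : ℝ) : ℂ) - y * Complex.I := by
    push_cast; ring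
  have e3 : ‖Complex.Gamma (((1 : ℝ) : ℂ) + y * Complex.I)‖ =
      |y| * ‖Complex.Gamma ((y : ℂ) * Complex.I)‖ := by
    have := Complex.Gamma_add_one _ h0
    rw [add_comm, Complex.ofReal_one, this, norm_mul]
    simp
  rw [norm_mul, e1, aux_gamma_neg, norm_div] at h2
  have e2 : ‖Complex.sin (Real.pi * ((y : ℂ) * Complex.I))‖ = Real.sinh (Real.pi * |y|) := by
    have : (Real.pi : ℂ) * (y * Complex.I) = ((Real.pi * y : ℝ) : ℂ) * Complex.I := by
      push_cast; ring
    rw [this, Complex.sin_mul_I, norm_mul, ← Complex.ofReal_sinh, Complex.norm_real,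
      Complex.norm_I, mul_one, Real.norm_eq_abs, Real.abs_sinh, abs_mul, abs_of_pos Real.pi_pos]
  rw [e2, Complex.norm_real, Real.norm_of_nonneg Real.pi_pos.le] at h2
  have hy' : 0 < |y| := abs_pos.2 hy
  have h5 := aux_x_sinh (mul_pos Real.pi_pos hy')
  calc ‖Complex.Gamma (((1 : ℝ) : ℂ) + y * Complex.I)‖ ^ 2
      = |y| * (‖Complex.Gamma ((y : ℂ) * Complex.I)‖ *
          ‖Complex.Gamma (((1 : ℝ) : ℂ) + y * Complex.I)‖) := by
        rw [sq]; nth_rewrite 1 [e3]; ring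
    _ = Real.pi * |y| / Real.sinh (Real.pi * |y|) := by rw [h2]; ring
    _ ≤ _ := h5
    _ ≤ _ := by
        gcongr
        nlinarith [Real.pi_lt_four]

/-! ### The Mellin–Barnes integrand as a holomorphic function -/

/-- The integrand as a function of `s`. -/
noncomputable def auxF (k : ℕ) (t w : ℝ) (s : ℂ) : ℂ :=
  Complex.Gamma ((k : ℂ) + t * Complex.I + s) *
    Complex.Gamma ((k : ℂ) - t * Complex.I + s) *
    Complex.Gamma (-s) /
    Complex.Gamma (2 * (k : ℂ) + s) *
    Complex.exp (s * Real.log w)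

theorem aux_mb_eq (k : ℕ) (t c w τ : ℝ) :
    mbIntegrand k t c w τ = auxF k t w ((c : ℂ) + τ * Complex.I) := by
  unfold mbIntegrand auxF
  simp only [add_assoc]

theorem aux_not_neg {z : ℂ} (hz : 0 < z.re) (m : ℕ) : z ≠ -m := by
  intro h
  rw [h] at hz
  simp at hz
  have : (0:ℝ) ≤ m := Nat.cast_nonneg m
  linarith

theorem auxF_diff (k : ℕ) (t w : ℝ) {s : ℂ} (h1 : -(k : ℝ) < s.re) (h2 : s.re < 0) :
    DifferentiableAt ℂ (auxF k t w) s := by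
  have hk : (0:ℝ) ≤ k := Nat.cast_nonneg k
  unfold auxF
  have a1 : DifferentiableAt ℂ (fun s : ℂ => Complex.Gamma ((k : ℂ) + t * Complex.I + s)) s :=
    DifferentiableAt.comp s (g := Complex.Gamma)
      (Complex.differentiableAt_Gamma _ (aux_not_neg (by simp; linarith))) (by fun_prop)
  have a2 : DifferentiableAt ℂ (fun s : ℂ => Complex.Gamma ((k : ℂ) - t * Complex.I + s)) s :=
    DifferentiableAt.comp s (g := Complex.Gamma)
      (Complex.differentiableAt_Gamma _ (aux_not_neg (by simp; linarith))) (by fun_prop)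
  have a3 : DifferentiableAt ℂ (fun s : ℂ => Complex.Gamma (-s)) s :=
    DifferentiableAt.comp s (g := Complex.Gamma)
      (Complex.differentiableAt_Gamma _ (aux_not_neg (by simp; linarith))) (by fun_prop)
  have a4 : DifferentiableAt ℂ (fun s : ℂ => Complex.Gamma (2 * (k : ℂ) + s)) s :=
    DifferentiableAt.comp s (g := Complex.Gamma)
      (Complex.differentiableAt_Gamma _ (aux_not_neg (by simp; linarith))) (by fun_prop)
  refine (((a1.mul a2).mul a3).div a4 ?_).mul (by fun_prop)
  exact Complex.Gamma_ne_zero_of_re_pos (by simp; linarith)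

/-- Norm of the integrand in terms of real parameters. -/
theorem aux_mb_norm (k : ℕ) (t c w τ : ℝ) (hw : 0 < w) :
    ‖mbIntegrand k t c w τ‖ =
      ‖Complex.Gamma (((k + c : ℝ) : ℂ) + ((τ + t : ℝ) : ℂ) * Complex.I)‖ *
      ‖Complex.Gamma (((k + c : ℝ) : ℂ) + ((τ - t : ℝ) : ℂ) * Complex.I)‖ *
      (‖Complex.Gamma (((-c : ℝ) : ℂ) + τ * Complex.I)‖ /
      ‖Complex.Gamma (((2 * k + c : ℝ) : ℂ) + τ * Complex.I)‖) * w ^ c := by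
  unfold mbIntegrand
  rw [norm_mul, norm_div, norm_mul, norm_mul, Complex.norm_exp, Real.rpow_def_of_pos hw,
    ← aux_gamma_neg (-c), mul_div_assoc]
  have e1 : (k : ℂ) + t * Complex.I + c + τ * Complex.I =
      ((k + c : ℝ) : ℂ) + ((τ + t : ℝ) : ℂ) * Complex.I := by push_cast; ring
  have e2 : (k : ℂ) - t * Complex.I + c + τ * Complex.I =
      ((k + c : ℝ) : ℂ) + ((τ - t : ℝ) : ℂ) * Complex.I := by push_cast; ring
  have e3 : -((c : ℂ) + τ * Complex.I) = ((-c : ℝ) : ℂ) - τ * Complex.I := by push_cast; ring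
  have e4 : 2 * (k : ℂ) + c + τ * Complex.I = ((2 * k + c : ℝ) : ℂ) + τ * Complex.I := by
    push_cast; ring
  have e5 : (((c : ℂ) + τ * Complex.I) * Real.log w).re = Real.log w * c := by
    rw [Complex.re_mul_ofReal]; simp [mul_comm]
  rw [e1, e2, e3, e4, e5]

theorem aux_mb_bound (k : ℕ) (t c w τ : ℝ) (hw : 0 < w) (h1 : -(k : ℝ) < c) (h2 : c < 0) :
    ‖mbIntegrand k t c w τ‖ ≤
      (Real.Gamma (k + c + 2) * Real.Gamma (k + c) * (Real.Gamma (-c) / Real.Gamma (2 * k + c)) *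
        w ^ c) * ((k + c) ^ 2 + (τ + t) ^ 2)⁻¹ := by
  have hk : (0:ℝ) ≤ k := Nat.cast_nonneg k
  have hkc : 0 < k + c := by linarith
  have h2k : 0 < 2 * k + c := by linarith
  rw [aux_mb_norm k t c w τ hw]
  have b1 : ‖Complex.Gamma (((k + c : ℝ) : ℂ) + ((τ + t : ℝ) : ℂ) * Complex.I)‖ ≤
      Real.Gamma (k + c + 2) * ((k + c) ^ 2 + (τ + t) ^ 2)⁻¹ := by
    rw [← div_eq_mul_inv, le_div_iff₀ (by positivity)]
    have e1 := aux_gamma_step (y := τ + t) hkc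
    have e2 := aux_gamma_step (y := τ + t) (a := k + c + 1) (by linarith)
    have e3 := aux_gamma_le (a := k + c + 1 + 1) (τ + t) (by linarith)
    rw [e2, e1] at e3
    have e4 : (k + c) ^ 2 + (τ + t) ^ 2 = ‖(((k + c : ℝ) : ℂ) + ((τ + t : ℝ) : ℂ) * Complex.I)‖ ^ 2 := by
      rw [Complex.norm_add_mul_I, Real.sq_sqrt (by positivity)]
    have e5 : ‖(((k + c : ℝ) : ℂ) + ((τ + t : ℝ) : ℂ) * Complex.I)‖ ≤
        ‖(((k + c + 1 : ℝ) : ℂ) + ((τ + t : ℝ) : ℂ) * Complex.I)‖ := by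
      rw [Complex.norm_add_mul_I, Complex.norm_add_mul_I]
      apply Real.sqrt_le_sqrt
      nlinarith
    rw [e4]
    calc _ = ‖(((k + c : ℝ) : ℂ) + ((τ + t : ℝ) : ℂ) * Complex.I)‖ *
          (‖(((k + c : ℝ) : ℂ) + ((τ + t : ℝ) : ℂ) * Complex.I)‖ *
          ‖Complex.Gamma (((k + c : ℝ) : ℂ) + ((τ + t : ℝ) : ℂ) * Complex.I)‖) := by ring
      _ ≤ _ := mul_le_mul_of_nonneg_right e5 (by positivity)
      _ ≤ Real.Gamma (k + c + 1 + 1) := e3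
      _ = _ := by ring_nf
  have b2 := aux_gamma_le (τ - t) hkc
  have b3 : ‖Complex.Gamma (((-c : ℝ) : ℂ) + τ * Complex.I)‖ /
      ‖Complex.Gamma (((2 * k + c : ℝ) : ℂ) + τ * Complex.I)‖ ≤
      Real.Gamma (-c) / Real.Gamma (2 * k + c) := by
    rw [div_le_div_iff₀ (aux_gamma_pos _ h2k) (Real.Gamma_pos_of_pos h2k)]
    exact aux_gamma_mono τ (by linarith) (by linarith)
  have g1 := Real.Gamma_pos_of_pos (show 0 < k + c + 2 by linarith)
  have g2 := Real.Gamma_pos_of_pos hkc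
  calc _ ≤ (Real.Gamma (k + c + 2) * ((k + c) ^ 2 + (τ + t) ^ 2)⁻¹) * Real.Gamma (k + c) *
        (Real.Gamma (-c) / Real.Gamma (2 * k + c)) * w ^ c := by gcongr
    _ = _ := by ring

theorem aux_mb_cont (k : ℕ) (t c w : ℝ) (h1 : -(k : ℝ) < c) (h2 : c < 0) :
    Continuous (mbIntegrand k t c w) := by
  have : mbIntegrand k t c w = fun τ : ℝ => auxF k t w ((c : ℂ) + τ * Complex.I) := by
    funext τ; exact aux_mb_eq k t c w τ
  rw [this, continuous_iff_continuousAt]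
  intro τ
  refine ContinuousAt.comp (g := auxF k t w)
    (auxF_diff k t w (by simpa using h1) (by simpa using h2)).continuousAt (by fun_prop)

theorem aux_inv_integrable (a t : ℝ) (ha : 0 < a) :
    Integrable (fun τ : ℝ => (a ^ 2 + (τ + t) ^ 2)⁻¹) := by
  have h := (integrable_inv_one_add_sq.comp_mul_left' (R := a⁻¹) (by positivity)).comp_add_right t
  have h2 := h.const_mul ((a ^ 2)⁻¹)
  refine h2.congr (Filter.Eventually.of_forall fun τ => ?_)
  simp only
  rw [← mul_inv]
  congr 1
  field_simp

theorem aux_mb_integrable (k : ℕ) (t c w : ℝ) (hw : 0 < w) (h1 : -(k : ℝ) < c) (h2 : c < 0) :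
    Integrable (mbIntegrand k t c w) := by
  refine Integrable.mono' ((aux_inv_integrable (k + c) t (by linarith)).const_mul _)
    (aux_mb_cont k t c w h1 h2).aestronglyMeasurable
    (Filter.Eventually.of_forall fun τ => aux_mb_bound k t c w τ hw h1 h2)

theorem aux_contour_le (k : ℕ) (t c₁ c₂ w : ℝ) (hw : 0 < w) (h1 : -(k : ℝ) < c₁) (h12 : c₁ ≤ c₂)
    (h2 : c₂ < 0) :
    ∫ τ : ℝ, mbIntegrand k t c₁ w τ = ∫ τ : ℝ, mbIntegrand k t c₂ w τ := by
  have hk : (0:ℝ) ≤ k := Nat.cast_nonneg k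
  -- uniform constant
  obtain ⟨M, hM⟩ : ∃ M : ℝ, ∀ x ∈ Set.Icc c₁ c₂,
      (Real.Gamma (k + x + 2) * Real.Gamma (k + x) * (Real.Gamma (-x) / Real.Gamma (2 * k + x)) *
        w ^ x) ≤ M := by
    have hg : ∀ z : ℝ, 0 < z → ContinuousAt Real.Gamma z := fun z hz =>
      (Real.differentiableAt_Gamma (fun m => by
        have : (0:ℝ) ≤ m := Nat.cast_nonneg m
        intro h; linarith)).continuousAt
    have hc : ContinuousOn (fun x : ℝ => (Real.Gamma (k + x + 2) * Real.Gamma (k + x) *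
        (Real.Gamma (-x) / Real.Gamma (2 * k + x)) * w ^ x)) (Set.Icc c₁ c₂) := by
      intro x hx
      apply ContinuousAt.continuousWithinAt
      have l1 := hx.1
      have l2 := hx.2
      have a1 : ContinuousAt (fun x : ℝ => Real.Gamma (k + x + 2)) x :=
        ContinuousAt.comp (g := Real.Gamma) (hg _ (by linarith)) (by fun_prop)
      have a2 : ContinuousAt (fun x : ℝ => Real.Gamma (k + x)) x :=
        ContinuousAt.comp (g := Real.Gamma) (hg _ (by linarith)) (by fun_prop)
      have a3 : ContinuousAt (fun x : ℝ => Real.Gamma (-x)) x :=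
        ContinuousAt.comp (g := Real.Gamma) (hg _ (by linarith)) (by fun_prop)
      have a4 : ContinuousAt (fun x : ℝ => Real.Gamma (2 * k + x)) x :=
        ContinuousAt.comp (g := Real.Gamma) (hg _ (by linarith)) (by fun_prop)
      have a5 : ContinuousAt (fun x : ℝ => w ^ x) x := Real.continuousAt_const_rpow hw.ne'
      exact ((a1.mul a2).mul (a3.div a4 (Real.Gamma_pos_of_pos (by linarith)).ne')).mul a5
    obtain ⟨M, hM⟩ := isCompact_Icc.bddAbove_image hc
    exact ⟨M, fun x hx => hM ⟨x, hx, rfl⟩⟩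
  have hbd : ∀ x ∈ Set.Icc c₁ c₂, ∀ τ : ℝ, ‖auxF k t w ((x : ℂ) + τ * Complex.I)‖ ≤
      M * ((k + c₁) ^ 2 + (τ + t) ^ 2)⁻¹ := by
    intro x hx τ
    have l1 := hx.1
    have l2 := hx.2
    rw [← aux_mb_eq]
    refine (aux_mb_bound k t x w τ hw (by linarith) (by linarith)).trans ?_
    have hA : 0 < k + c₁ := by linarith
    have hB : 0 < k + x := by linarith
    refine mul_le_mul (hM x hx) ?_ (by positivity) ?_
    · gcongr
    · refine le_trans ?_ (hM x hx)
      have g1 := Real.Gamma_pos_of_pos (show 0 < k + x + 2 by linarith)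
      have g2 := Real.Gamma_pos_of_pos hB
      have g3 := Real.Gamma_pos_of_pos (show 0 < -x by linarith)
      have g4 := Real.Gamma_pos_of_pos (show 0 < 2 * k + x by linarith)
      positivity
  have hrect : ∀ R : ℝ,
      (∫ x : ℝ in c₁..c₂, auxF k t w (x + ((-R : ℝ) : ℂ) * Complex.I)) -
      (∫ x : ℝ in c₁..c₂, auxF k t w (x + (R : ℂ) * Complex.I)) +
      Complex.I • (∫ y : ℝ in (-R)..R, mbIntegrand k t c₂ w y) -
      Complex.I • (∫ y : ℝ in (-R)..R, mbIntegrand k t c₁ w y) = 0 := by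
    intro R
    have := Complex.integral_boundary_rect_eq_zero_of_differentiableOn (auxF k t w)
      (⟨c₁, -R⟩ : ℂ) (⟨c₂, R⟩ : ℂ) (by
        intro s hs
        rw [Complex.mem_reProdIm] at hs
        have hs1 := hs.1
        simp only at hs1
        rw [Set.uIcc_of_le h12] at hs1
        have l1 := hs1.1
        have l2 := hs1.2
        exact (auxF_diff k t w (by linarith) (by linarith)).differentiableWithinAt)
    simp only at this
    simp only [aux_mb_eq]
    exact this
  have hdec : Filter.Tendsto (fun R : ℝ => M * ((k + c₁) ^ 2 + (R + t) ^ 2)⁻¹) Filter.atTop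
      (nhds 0) := by
    rw [show (0:ℝ) = M * 0 by simp]
    refine Filter.Tendsto.const_mul _ (Filter.Tendsto.inv_tendsto_atTop ?_)
    refine Filter.tendsto_atTop_add_const_left _ _ ?_
    exact (Filter.tendsto_pow_atTop two_ne_zero).comp
      (Filter.tendsto_atTop_add_const_right _ _ Filter.tendsto_id)
  have hdec' : Filter.Tendsto (fun R : ℝ => M * ((k + c₁) ^ 2 + (-R + t) ^ 2)⁻¹) Filter.atTop
      (nhds 0) := by
    rw [show (0:ℝ) = M * 0 by simp]
    refine Filter.Tendsto.const_mul _ (Filter.Tendsto.inv_tendsto_atTop ?_)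
    refine Filter.tendsto_atTop_add_const_left _ _ ?_
    have : (fun R : ℝ => (-R + t) ^ 2) = fun R => (R + -t) ^ 2 := by funext R; ring
    rw [this]
    exact (Filter.tendsto_pow_atTop two_ne_zero).comp
      (Filter.tendsto_atTop_add_const_right _ _ Filter.tendsto_id)
  have htop : ∀ g : ℝ → ℝ, Filter.Tendsto (fun R : ℝ => M * ((k + c₁) ^ 2 + (g R + t) ^ 2)⁻¹)
      Filter.atTop (nhds 0) → Filter.Tendsto
      (fun R : ℝ => ∫ x : ℝ in c₁..c₂, auxF k t w (x + (g R : ℂ) * Complex.I))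
      Filter.atTop (nhds 0) := by
    intro g hg
    have h0 := hg.mul_const |c₂ - c₁|
    rw [zero_mul] at h0
    refine squeeze_zero_norm (fun R => ?_) h0
    refine intervalIntegral.norm_integral_le_of_norm_le_const fun x hx => ?_
    rw [Set.uIoc_of_le h12] at hx
    exact hbd x ⟨hx.1.le, hx.2⟩ (g R)
  have hT1 := htop (fun R => R) hdec
  have hT2 := htop (fun R => -R) hdec'
  have hI1 := intervalIntegral_tendsto_integral (aux_mb_integrable k t c₁ w hw h1 (by linarith))
    Filter.tendsto_neg_atTop_atBot Filter.tendsto_id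
  have hI2 := intervalIntegral_tendsto_integral (aux_mb_integrable k t c₂ w hw (by linarith) h2)
    Filter.tendsto_neg_atTop_atBot Filter.tendsto_id
  have hall := ((hT2.sub hT1).add (hI2.const_smul Complex.I)).sub (hI1.const_smul Complex.I)
  have h00 := tendsto_nhds_unique (tendsto_const_nhds.congr fun R => (hrect R).symm) hall
  simp only [sub_zero, zero_add, smul_eq_mul] at h00
  rw [← mul_sub] at h00
  have := (mul_eq_zero.1 h00.symm).resolve_left Complex.I_ne_zero
  exact (sub_eq_zero.1 this).symm

theorem aux_Hmb_indep (k : ℕ) (t c₁ c₂ w : ℝ) (hw : 0 < w) (h1 : -(k : ℝ) < c₁)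
    (h1' : c₁ < 0) (h2' : -(k : ℝ) < c₂) (h2 : c₂ < 0) :
    Hmb k t c₁ w = Hmb k t c₂ w := by
  unfold Hmb
  rcases le_total c₁ c₂ with h | h
  · rw [aux_contour_le k t c₁ c₂ w hw h1 h h2]
  · rw [aux_contour_le k t c₂ c₁ w hw h2' h h1']

/-! ### Pointwise bounds of the integrand on three vertical lines -/

theorem aux_abs_max (t τ : ℝ) : |τ + t| + |τ - t| = 2 * max |t| |τ| := by
  rcases abs_cases (τ + t) with ⟨h1, _⟩ | ⟨h1, _⟩ <;> rcases abs_cases (τ - t) with ⟨h2, _⟩ | ⟨h2, _⟩ <;>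
  rcases abs_cases t with ⟨h3, _⟩ | ⟨h3, _⟩ <;> rcases abs_cases τ with ⟨h4, _⟩ | ⟨h4, _⟩ <;>
  rcases max_cases |t| |τ| with ⟨h5, _⟩ | ⟨h5, _⟩ <;> linarith

theorem aux_half_prod (t τ : ℝ) :
    ‖Complex.Gamma (((1 / 2 : ℝ) : ℂ) + ((τ + t : ℝ) : ℂ) * Complex.I)‖ *
    ‖Complex.Gamma (((1 / 2 : ℝ) : ℂ) + ((τ - t : ℝ) : ℂ) * Complex.I)‖ ≤
      2 * Real.pi * Real.exp (-(Real.pi * max |t| |τ|)) := by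
  have hpi := Real.pi_pos
  refine (fun h h0 => (pow_le_pow_iff_left₀ (by positivity) h0 two_ne_zero).1 h) ?_ (by positivity)
  rw [mul_pow]
  refine (mul_le_mul (aux_gamma_half (τ + t)) (aux_gamma_half (τ - t)) (by positivity)
    (by positivity)).trans (le_of_eq ?_)
  have e : Real.exp (-(Real.pi * |τ + t|)) * Real.exp (-(Real.pi * |τ - t|)) =
      Real.exp (-(Real.pi * max |t| |τ|)) ^ 2 := by
    rw [← Real.exp_add, ← Real.exp_nat_mul]
    congr 1
    have := aux_abs_max t τ
    push_cast
    linear_combination (-Real.pi) * this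
  linear_combination (4 * Real.pi ^ 2) * e

theorem aux_one_prod (t τ : ℝ) :
    ‖Complex.Gamma (((1 : ℝ) : ℂ) + ((τ + t : ℝ) : ℂ) * Complex.I)‖ *
    ‖Complex.Gamma (((1 : ℝ) : ℂ) + ((τ - t : ℝ) : ℂ) * Complex.I)‖ ≤
      8 * (1 + |t| + |τ|) * Real.exp (-(Real.pi * max |t| |τ|)) := by
  have hpi := Real.pi_pos
  refine (fun h h0 => (pow_le_pow_iff_left₀ (by positivity) h0 two_ne_zero).1 h) ?_ (by positivity)
  rw [mul_pow]
  refine (mul_le_mul (aux_gamma_one (τ + t)) (aux_gamma_one (τ - t)) (by positivity)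
    (by positivity)).trans ?_
  have e : Real.exp (-(Real.pi * |τ + t|)) * Real.exp (-(Real.pi * |τ - t|)) =
      Real.exp (-(Real.pi * max |t| |τ|)) ^ 2 := by
    rw [← Real.exp_add, ← Real.exp_nat_mul]
    congr 1
    have := aux_abs_max t τ
    push_cast
    linear_combination (-Real.pi) * this
  have a1 : |τ + t| ≤ |t| + |τ| := by have := abs_add_le τ t; linarith
  have a2 : |τ - t| ≤ |t| + |τ| := by have := abs_sub τ t; linarith
  calc _ = (8 * (1 + |τ + t|)) * (8 * (1 + |τ - t|)) *
        (Real.exp (-(Real.pi * |τ + t|)) * Real.exp (-(Real.pi * |τ - t|))) := by ring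
    _ = (8 * (1 + |τ + t|)) * (8 * (1 + |τ - t|)) *
        Real.exp (-(Real.pi * max |t| |τ|)) ^ 2 := by rw [e]
    _ ≤ (8 * (1 + (|t| + |τ|))) * (8 * (1 + (|t| + |τ|))) *
        Real.exp (-(Real.pi * max |t| |τ|)) ^ 2 := by gcongr
    _ = _ := by ring

theorem aux_cosh_le (t : ℝ) : Real.cosh (Real.pi * t) ≤ Real.exp (Real.pi * |t|) := by
  rw [← Real.cosh_abs, abs_mul, abs_of_pos Real.pi_pos, Real.cosh_eq]
  have : Real.exp (-(Real.pi * |t|)) ≤ Real.exp (Real.pi * |t|) := by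
    apply Real.exp_le_exp.2
    have := mul_nonneg Real.pi_pos.le (abs_nonneg t)
    linarith
  linarith

theorem aux_ratio (t τ p : ℝ) (hp : 0 ≤ p) (hp3 : p ≤ 3) :
    Real.exp (Real.pi * |t|) * Real.exp (-(Real.pi * max |t| |τ|)) ≤
      ((1 + |t|) / (1 + |τ|)) ^ p := by
  have h1 : 0 ≤ |t| := abs_nonneg t
  have h2 : 0 ≤ |τ| := abs_nonneg τ
  rw [← Real.exp_add]
  rcases le_total |τ| |t| with h | h
  · rw [max_eq_left h]
    simp only [add_neg_cancel, Real.exp_zero]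
    apply Real.one_le_rpow _ hp
    rw [le_div_iff₀ (by linarith)]
    linarith
  · rw [max_eq_right h]
    have h3 : Real.exp (-(|τ| - |t|)) ≤ (1 + |t|) / (1 + |τ|) := by
      rw [Real.exp_neg, inv_le_comm₀ (Real.exp_pos _) (by positivity), inv_div,
        div_le_iff₀ (by linarith)]
      have := Real.add_one_le_exp (|τ| - |t|)
      nlinarith
    refine le_trans ?_ (Real.rpow_le_rpow (Real.exp_pos _).le h3 hp)
    rw [← Real.exp_mul]
    apply Real.exp_le_exp.2
    nlinarith [Real.pi_gt_three]

theorem aux_norm_lower (a τ : ℝ) (ha : 1 / 2 ≤ a) :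
    (1 + |τ|) / 3 ≤ ‖((a : ℂ) + τ * Complex.I)‖ := by
  have h1 := Complex.abs_re_le_norm ((a : ℂ) + τ * Complex.I)
  have h2 := Complex.abs_im_le_norm ((a : ℂ) + τ * Complex.I)
  simp at h1 h2
  have := le_abs_self a
  linarith

theorem aux_gamma_shift {a b : ℝ} (y : ℝ) (ha : 0 < a) (hab : a ≤ b) (n : ℕ) :
    ‖Complex.Gamma (((a + n : ℝ) : ℂ) + y * Complex.I)‖ * Real.Gamma b ≤
      Real.Gamma a * ‖Complex.Gamma (((b + n : ℝ) : ℂ) + y * Complex.I)‖ := by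
  induction n with
  | zero => simpa using aux_gamma_mono y ha hab
  | succ n ih =>
    have hn : (0:ℝ) ≤ n := Nat.cast_nonneg n
    have e1 := aux_gamma_step (a := a + n) (y := y) (by linarith)
    have e2 := aux_gamma_step (a := b + n) (y := y) (by linarith)
    have c1 : a + (n + 1 : ℕ) = a + n + 1 := by push_cast; ring
    have c2 : b + (n + 1 : ℕ) = b + n + 1 := by push_cast; ring
    rw [c1, c2, e1, e2]
    have e5 : ‖(((a + n : ℝ) : ℂ) + (y : ℂ) * Complex.I)‖ ≤
        ‖(((b + n : ℝ) : ℂ) + (y : ℂ) * Complex.I)‖ := by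
      rw [Complex.norm_add_mul_I, Complex.norm_add_mul_I]
      apply Real.sqrt_le_sqrt
      have : (a + n) ^ 2 ≤ (b + n) ^ 2 := by gcongr
      linarith
    have hG : 0 ≤ ‖Complex.Gamma (((a + n : ℝ) : ℂ) + y * Complex.I)‖ * Real.Gamma b :=
      mul_nonneg (norm_nonneg _) (Real.Gamma_pos_of_pos (by linarith)).le
    calc _ = ‖(((a + n : ℝ) : ℂ) + (y : ℂ) * Complex.I)‖ *
          (‖Complex.Gamma (((a + n : ℝ) : ℂ) + y * Complex.I)‖ * Real.Gamma b) := by ring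
      _ ≤ ‖(((b + n : ℝ) : ℂ) + (y : ℂ) * Complex.I)‖ *
          (Real.Gamma a * ‖Complex.Gamma (((b + n : ℝ) : ℂ) + y * Complex.I)‖) := by gcongr
      _ = _ := by ring

/-- Bound on the line `Re s = -k + δ`. -/
theorem aux_ptA (δ : ℝ) (h0 : 0 < δ) (h1 : δ ≤ 1 / 2) : ∃ C : ℝ, 0 < C ∧
    ∀ (k : ℕ) (t w τ : ℝ), 1 ≤ k → 0 < w →
    Real.cosh (Real.pi * t) * ‖mbIntegrand k t (-k + δ) w τ‖ ≤
      (C * (1 + |t|) ^ (1 + δ) * w ^ (-k + δ)) * (1 + |τ|) ^ (-(1 + δ)) := by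
  have g1 := Real.Gamma_pos_of_pos h0
  have g2 := Real.Gamma_pos_of_pos (show (0:ℝ) < 1 / 2 by norm_num)
  have g3 := Real.Gamma_pos_of_pos (show (0:ℝ) < 1 - δ by linarith)
  have g4 := Real.Gamma_pos_of_pos (show (0:ℝ) < 1 + δ by linarith)
  have hpi := Real.pi_pos
  refine ⟨(Real.Gamma δ / Real.Gamma (1 / 2)) ^ 2 * (2 * Real.pi) *
    (Real.Gamma (1 - δ) / Real.Gamma (1 + δ)), by positivity, ?_⟩
  intro k t w τ hk hw
  obtain ⟨n, rfl⟩ : ∃ n, k = n + 1 := ⟨k - 1, by omega⟩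
  rw [aux_mb_norm _ t _ w τ hw]
  have e1 : ((n + 1 : ℕ) : ℝ) + (-((n + 1 : ℕ) : ℝ) + δ) = δ := by ring
  have e2 : -(-((n + 1 : ℕ) : ℝ) + δ) = (1 - δ) + n := by push_cast; ring
  have e3 : 2 * ((n + 1 : ℕ) : ℝ) + (-((n + 1 : ℕ) : ℝ) + δ) = (1 + δ) + n := by push_cast; ring
  rw [e1, e2, e3]
  have hn : (0:ℝ) ≤ n := Nat.cast_nonneg n
  have b1 : ∀ y : ℝ, ‖Complex.Gamma ((δ : ℂ) + y * Complex.I)‖ ≤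
      (Real.Gamma δ / Real.Gamma (1 / 2)) * ‖Complex.Gamma (((1 / 2 : ℝ) : ℂ) + y * Complex.I)‖ := by
    intro y
    rw [div_mul_eq_mul_div, le_div_iff₀ g2]
    exact aux_gamma_mono y h0 h1
  have b3 : ‖Complex.Gamma (((1 - δ + n : ℝ) : ℂ) + τ * Complex.I)‖ /
      ‖Complex.Gamma (((1 + δ + n : ℝ) : ℂ) + τ * Complex.I)‖ ≤
      Real.Gamma (1 - δ) / Real.Gamma (1 + δ) := by
    rw [div_le_div_iff₀ (aux_gamma_pos _ (by linarith)) g4]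
    exact aux_gamma_shift τ (by linarith) (by linarith) n
  have b4 := aux_half_prod t τ
  have b5 := aux_ratio t τ (1 + δ) (by linarith) (by linarith)
  have b6 : ((1 + |t|) / (1 + |τ|)) ^ (1 + δ) = (1 + |t|) ^ (1 + δ) * (1 + |τ|) ^ (-(1 + δ)) := by
    rw [Real.div_rpow (by positivity) (by positivity), Real.rpow_neg (by positivity),
      div_eq_mul_inv]
  rw [b6] at b5
  set W := w ^ (-((n + 1 : ℕ) : ℝ) + δ) with hW
  have hWp : 0 ≤ W := Real.rpow_nonneg hw.le _
  set A := Real.Gamma δ / Real.Gamma (1 / 2)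
  set D := Real.Gamma (1 - δ) / Real.Gamma (1 + δ)
  have hA : 0 < A := div_pos g1 g2
  have hD : 0 < D := div_pos g3 g4
  calc _ ≤ Real.exp (Real.pi * |t|) * ((A * ‖Complex.Gamma (((1 / 2 : ℝ) : ℂ) + ((τ + t : ℝ) : ℂ) * Complex.I)‖) *
        (A * ‖Complex.Gamma (((1 / 2 : ℝ) : ℂ) + ((τ - t : ℝ) : ℂ) * Complex.I)‖) * D * W) := by
        gcongr
        · exact aux_cosh_le t
        · exact b1 _
        · exact b1 _
    _ = Real.exp (Real.pi * |t|) * (A ^ 2 * (‖Complex.Gamma (((1 / 2 : ℝ) : ℂ) + ((τ + t : ℝ) : ℂ) * Complex.I)‖ *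
        ‖Complex.Gamma (((1 / 2 : ℝ) : ℂ) + ((τ - t : ℝ) : ℂ) * Complex.I)‖) * D * W) := by ring
    _ ≤ Real.exp (Real.pi * |t|) * (A ^ 2 * (2 * Real.pi * Real.exp (-(Real.pi * max |t| |τ|))) * D * W) := by
        gcongr
    _ = (A ^ 2 * (2 * Real.pi) * D * W) *
        (Real.exp (Real.pi * |t|) * Real.exp (-(Real.pi * max |t| |τ|))) := by ring
    _ ≤ (A ^ 2 * (2 * Real.pi) * D * W) * ((1 + |t|) ^ (1 + δ) * (1 + |τ|) ^ (-(1 + δ))) := by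
        gcongr
    _ = _ := by ring

/-- Bound on the line `Re s = -k + 1/2`. -/
theorem aux_ptB (δ : ℝ) (h0 : 0 < δ) (h1 : δ ≤ 1 / 2) (k : ℕ) (t w τ : ℝ) (hk : 1 ≤ k)
    (hw : 0 < w) :
    Real.cosh (Real.pi * t) * ‖mbIntegrand k t (-k + 1 / 2) w τ‖ ≤
      (6 * Real.pi * (1 + |t|) ^ δ * w ^ (-k + 1 / 2 : ℝ)) * (1 + |τ|) ^ (-(1 + δ)) := by
  have hpi := Real.pi_pos
  obtain ⟨n, rfl⟩ : ∃ n, k = n + 1 := ⟨k - 1, by omega⟩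
  rw [aux_mb_norm _ t _ w τ hw]
  have e1 : ((n + 1 : ℕ) : ℝ) + (-((n + 1 : ℕ) : ℝ) + 1 / 2) = 1 / 2 := by ring
  have e2 : -(-((n + 1 : ℕ) : ℝ) + 1 / 2) = 1 / 2 + n := by push_cast; ring
  have e3 : 2 * ((n + 1 : ℕ) : ℝ) + (-((n + 1 : ℕ) : ℝ) + 1 / 2) = 1 / 2 + n + 1 := by
    push_cast; ring
  have hn : (0:ℝ) ≤ n := Nat.cast_nonneg n
  have hnp : (0:ℝ) < 1 / 2 + n := by linarith
  rw [e1, e2, e3, aux_gamma_step hnp]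
  have hl := aux_norm_lower (1 / 2 + n) τ (by linarith)
  have hq : 0 < 1 + |τ| := by positivity
  have b3 : ‖Complex.Gamma (((1 / 2 + n : ℝ) : ℂ) + τ * Complex.I)‖ /
      (‖(((1 / 2 + n : ℝ) : ℂ) + τ * Complex.I)‖ *
        ‖Complex.Gamma (((1 / 2 + n : ℝ) : ℂ) + τ * Complex.I)‖) ≤ 3 * (1 + |τ|)⁻¹ := by
    have hg := aux_gamma_pos τ hnp
    have hp : 0 < ‖(((1 / 2 + n : ℝ) : ℂ) + τ * Complex.I)‖ := lt_of_lt_of_le (by positivity) hl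
    rw [div_mul_cancel_right₀ hg.ne', inv_le_comm₀ hp (by positivity)]
    refine le_trans (le_of_eq ?_) hl
    field_simp
  have b4 := aux_half_prod t τ
  have b5 := aux_ratio t τ δ (by linarith) (by linarith)
  have b6 : ((1 + |t|) / (1 + |τ|)) ^ δ * (1 + |τ|)⁻¹ = (1 + |t|) ^ δ * (1 + |τ|) ^ (-(1 + δ)) := by
    rw [Real.div_rpow (by positivity) (by positivity), neg_add, Real.rpow_add hq,
      Real.rpow_neg_one, Real.rpow_neg hq.le]
    field_simp
  set W := w ^ (-((n + 1 : ℕ) : ℝ) + 1 / 2) with hW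
  have hWp : 0 ≤ W := Real.rpow_nonneg hw.le _
  calc _ ≤ Real.exp (Real.pi * |t|) * ((2 * Real.pi * Real.exp (-(Real.pi * max |t| |τ|))) *
        (3 * (1 + |τ|)⁻¹) * W) := by
        gcongr
        exact aux_cosh_le t
    _ = (6 * Real.pi * W) *
        (Real.exp (Real.pi * |t|) * Real.exp (-(Real.pi * max |t| |τ|)) * (1 + |τ|)⁻¹) := by ring
    _ ≤ (6 * Real.pi * W) * (((1 + |t|) / (1 + |τ|)) ^ δ * (1 + |τ|)⁻¹) := by
        gcongr
    _ = _ := by rw [b6]; ring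

theorem aux_prod_upper (a t τ : ℝ) :
    ‖((a : ℂ) + ((τ + t : ℝ) : ℂ) * Complex.I)‖ * ‖((a : ℂ) + ((τ - t : ℝ) : ℂ) * Complex.I)‖ ≤
      a ^ 2 + τ ^ 2 + t ^ 2 := by
  refine (fun h h0 => (pow_le_pow_iff_left₀ (by positivity) h0 two_ne_zero).1 h) ?_ (by positivity)
  rw [mul_pow, Complex.norm_add_mul_I, Complex.norm_add_mul_I, Real.sq_sqrt (by positivity),
    Real.sq_sqrt (by positivity)]
  nlinarith [sq_nonneg (τ * t)]

theorem aux_prod_lower (a b τ : ℝ) (ha : 0 ≤ a) (hb : 0 ≤ b) :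
    a * b + τ ^ 2 ≤
    ‖((a : ℂ) + τ * Complex.I)‖ * ‖((b : ℂ) + τ * Complex.I)‖ := by
  refine (fun h h0 => (pow_le_pow_iff_left₀ (by positivity) h0 two_ne_zero).1 h) ?_ (by positivity)
  rw [mul_pow, Complex.norm_add_mul_I, Complex.norm_add_mul_I, Real.sq_sqrt (by positivity),
    Real.sq_sqrt (by positivity)]
  nlinarith [sq_nonneg ((a - b) * τ)]

theorem aux_S1 (δ : ℝ) (h0 : 0 < δ) (h1 : δ ≤ 1 / 4) (t τ : ℝ) (n : ℕ) :
    ‖Complex.Gamma (((n + 1 - δ : ℝ) : ℂ) + ((τ + t : ℝ) : ℂ) * Complex.I)‖ *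
    ‖Complex.Gamma (((n + 1 - δ : ℝ) : ℂ) + ((τ - t : ℝ) : ℂ) * Complex.I)‖ *
    (‖(((1 - δ : ℝ) : ℂ) + τ * Complex.I)‖ * ‖Complex.Gamma (((1 - δ : ℝ) : ℂ) + τ * Complex.I)‖) ≤
    ((3 + |t|) ^ 2 / 4) ^ n *
    (‖Complex.Gamma (((1 - δ : ℝ) : ℂ) + ((τ + t : ℝ) : ℂ) * Complex.I)‖ *
    ‖Complex.Gamma (((1 - δ : ℝ) : ℂ) + ((τ - t : ℝ) : ℂ) * Complex.I)‖) *
    ‖Complex.Gamma (((2 * n + 2 - δ : ℝ) : ℂ) + τ * Complex.I)‖ := by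
  induction n with
  | zero =>
    have e := aux_gamma_step (a := 1 - δ) (y := τ) (by linarith)
    have c1 : (2 * ((0 : ℕ) : ℝ) + 2 - δ) = 1 - δ + 1 := by push_cast; ring
    have c2 : (((0 : ℕ) : ℝ) + 1 - δ) = 1 - δ := by push_cast; ring
    rw [c1, c2, e, pow_zero, one_mul]
  | succ n ih =>
    have hn : (0:ℝ) ≤ n := Nat.cast_nonneg n
    have c1 : (((n + 1 : ℕ) : ℝ) + 1 - δ) = (n + 1 - δ) + 1 := by push_cast; ring
    have c2 : (2 * ((n + 1 : ℕ) : ℝ) + 2 - δ) = (2 * n + 2 - δ + 1) + 1 := by push_cast; ring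
    rw [c1, c2, aux_gamma_step (by linarith), aux_gamma_step (by linarith),
      aux_gamma_step (by linarith), aux_gamma_step (by linarith)]
    have u := aux_prod_upper (n + 1 - δ) t τ
    have l := aux_prod_lower (2 * n + 2 - δ) (2 * n + 2 - δ + 1) τ (by linarith) (by linarith)
    have key : (n + 1 - δ) ^ 2 + τ ^ 2 + t ^ 2 ≤ ((3 + |t|) ^ 2 / 4) *
        ((2 * n + 2 - δ) * (2 * n + 2 - δ + 1) + τ ^ 2) := by
      have k1 : (4:ℝ) * (n + 1) ^ 2 ≤ (2 * n + 2 - δ) * (2 * n + 2 - δ + 1) := by nlinarith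
      have k2 : (n + 1 - δ) ^ 2 ≤ (n + 1 : ℝ) ^ 2 := by
        apply pow_le_pow_left₀ <;> linarith
      have k3 : 9 + t ^ 2 ≤ (3 + |t|) ^ 2 := by
        have := abs_nonneg t
        nlinarith [sq_abs t]
      have k4 : (1:ℝ) ≤ (n + 1) ^ 2 := by nlinarith
      have k5 : ((3 + |t|) ^ 2 / 4) * (4 * (n + 1) ^ 2 + τ ^ 2) ≤ ((3 + |t|) ^ 2 / 4) *
        ((2 * n + 2 - δ) * (2 * n + 2 - δ + 1) + τ ^ 2) := by gcongr
      refine le_trans ?_ k5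
      have k6 : (9 + t ^ 2) / 4 * (4 * (n + 1) ^ 2 + τ ^ 2) ≤
        ((3 + |t|) ^ 2 / 4) * (4 * (n + 1) ^ 2 + τ ^ 2) := by gcongr
      refine le_trans ?_ k6
      nlinarith [sq_nonneg τ, sq_nonneg t, mul_nonneg (sq_nonneg t) (sq_nonneg τ),
        mul_le_mul_of_nonneg_left k4 (sq_nonneg t)]
    have key2 := (u.trans key).trans (mul_le_mul_of_nonneg_left l
      (show (0:ℝ) ≤ (3 + |t|) ^ 2 / 4 by positivity))
    have := mul_le_mul key2 ih (by positivity) (by positivity)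
    refine le_trans (le_of_eq ?_) (this.trans (le_of_eq ?_))
    · ring
    · ring

/-- Bound on the line `Re s = -δ`. -/
theorem aux_ptS (δ : ℝ) (h0 : 0 < δ) (h1 : δ ≤ 1 / 4) : ∃ C : ℝ, 0 < C ∧
    ∀ (k : ℕ) (t w τ : ℝ), 1 ≤ k → 0 < w →
    Real.cosh (Real.pi * t) * ‖mbIntegrand k t (-δ) w τ‖ ≤
      (C * (1 + |t|) ^ (1 + δ) * ((3 + |t|) ^ 2 / 4) ^ (k - 1) * w ^ (-δ)) *
        (1 + |τ|) ^ (-(1 + δ)) := by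
  have g1 := Real.Gamma_pos_of_pos h0
  have g3 := Real.Gamma_pos_of_pos (show (0:ℝ) < 1 - δ by linarith)
  refine ⟨Real.Gamma (1 - δ) ^ 2 * (Real.Gamma δ / Real.Gamma (1 - δ)) * 48, by positivity, ?_⟩
  intro k t w τ hk hw
  obtain ⟨n, rfl⟩ : ∃ n, k = n + 1 := ⟨k - 1, by omega⟩
  rw [aux_mb_norm _ t _ w τ hw]
  have e1 : ((n + 1 : ℕ) : ℝ) + (-δ) = n + 1 - δ := by push_cast; ring
  have e2 : -(-δ) = δ := by ring
  have e3 : 2 * ((n + 1 : ℕ) : ℝ) + (-δ) = 2 * n + 2 - δ := by push_cast; ring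
  have hn : (0:ℝ) ≤ n := Nat.cast_nonneg n
  rw [e1, e2, e3, Nat.add_sub_cancel]
  have hS := aux_S1 δ h0 h1 t τ n
  have hq : 0 < 1 + |τ| := by positivity
  have hl := aux_norm_lower (1 - δ) τ (by linarith)
  have hm := aux_gamma_mono τ h0 (show δ ≤ 1 - δ by linarith)
  have hu : ∀ y : ℝ, ‖Complex.Gamma (((1 - δ : ℝ) : ℂ) + y * Complex.I)‖ ≤
      Real.Gamma (1 - δ) * ‖Complex.Gamma (((1 : ℝ) : ℂ) + y * Complex.I)‖ := by
    intro y
    have := aux_gamma_mono y (show 0 < 1 - δ by linarith) (show 1 - δ ≤ 1 by linarith)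
    simpa using this
  have hG := aux_gamma_pos τ (show 0 < 2 * n + 2 - δ by linarith)
  have hG1 := aux_gamma_pos τ (show 0 < 1 - δ by linarith)
  have hu2 := mul_le_mul (hu (τ + t)) (hu (τ - t)) (norm_nonneg _) (by positivity)
  have hone := aux_one_prod t τ
  set X1 := ‖Complex.Gamma (((n + 1 - δ : ℝ) : ℂ) + ((τ + t : ℝ) : ℂ) * Complex.I)‖
  set X2 := ‖Complex.Gamma (((n + 1 - δ : ℝ) : ℂ) + ((τ - t : ℝ) : ℂ) * Complex.I)‖
  set Y := ‖Complex.Gamma (((2 * n + 2 - δ : ℝ) : ℂ) + τ * Complex.I)‖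
  set Z := ‖Complex.Gamma (((1 - δ : ℝ) : ℂ) + τ * Complex.I)‖
  set U := ‖(((1 - δ : ℝ) : ℂ) + τ * Complex.I)‖
  set O1 := ‖Complex.Gamma (((1 : ℝ) : ℂ) + ((τ + t : ℝ) : ℂ) * Complex.I)‖
  set O2 := ‖Complex.Gamma (((1 : ℝ) : ℂ) + ((τ - t : ℝ) : ℂ) * Complex.I)‖
  set V1 := ‖Complex.Gamma (((1 - δ : ℝ) : ℂ) + ((τ + t : ℝ) : ℂ) * Complex.I)‖
  set V2 := ‖Complex.Gamma (((1 - δ : ℝ) : ℂ) + ((τ - t : ℝ) : ℂ) * Complex.I)‖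
  set X3 := ‖Complex.Gamma ((δ : ℂ) + τ * Complex.I)‖
  set E := Real.exp (-(Real.pi * max |t| |τ|))
  set B := ((3 + |t|) ^ 2 / 4) ^ n
  have hB : 0 ≤ B := by positivity
  have hUp : 0 < U := lt_of_lt_of_le (by positivity) hl
  have hX3 : 0 ≤ X3 := norm_nonneg _
  have hX12 : X1 * X2 ≤ B * (V1 * V2) * Y / (U * Z) := by
    rw [le_div_iff₀ (by positivity)]; exact hS
  have hX3' : X3 ≤ (Real.Gamma δ / Real.Gamma (1 - δ)) * Z := by
    rw [div_mul_eq_mul_div, le_div_iff₀ g3]; exact hm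
  have hUi : U⁻¹ ≤ 3 * (1 + |τ|)⁻¹ := by
    rw [inv_le_comm₀ hUp (by positivity)]
    refine le_trans (le_of_eq ?_) hl
    field_simp
  have hmain : X1 * X2 * (X3 / Y) ≤
      Real.Gamma (1 - δ) ^ 2 * (Real.Gamma δ / Real.Gamma (1 - δ)) * B *
        (8 * (1 + |t| + |τ|) * E) * (3 * (1 + |τ|)⁻¹) := by
    calc X1 * X2 * (X3 / Y) ≤ (B * (V1 * V2) * Y / (U * Z)) *
          ((Real.Gamma δ / Real.Gamma (1 - δ)) * Z / Y) := by gcongr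
      _ = (Real.Gamma δ / Real.Gamma (1 - δ)) * B * (V1 * V2) * U⁻¹ := by
          field_simp
      _ ≤ (Real.Gamma δ / Real.Gamma (1 - δ)) * B *
          (Real.Gamma (1 - δ) * O1 * (Real.Gamma (1 - δ) * O2)) * (3 * (1 + |τ|)⁻¹) := by gcongr
      _ = Real.Gamma (1 - δ) ^ 2 * (Real.Gamma δ / Real.Gamma (1 - δ)) * B *
          (O1 * O2) * (3 * (1 + |τ|)⁻¹) := by ring
      _ ≤ _ := by gcongr
  have hratio : Real.exp (Real.pi * |t|) * ((1 + |t| + |τ|) * E) ≤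
      2 * (1 + |t|) * ((1 + |t|) / (1 + |τ|)) ^ δ := by
    have h1t : 0 ≤ |t| := abs_nonneg t
    have h2t : 0 ≤ |τ| := abs_nonneg τ
    rcases le_total |τ| |t| with h | h
    · have b5 := aux_ratio t τ δ (by linarith) (by linarith)
      calc _ = (1 + |t| + |τ|) * (Real.exp (Real.pi * |t|) * E) := by ring
        _ ≤ (2 * (1 + |t|)) * ((1 + |t|) / (1 + |τ|)) ^ δ := by
          gcongr
          linarith
    · have b5 := aux_ratio t τ (1 + δ) (by linarith) (by linarith)
      calc _ = (1 + |t| + |τ|) * (Real.exp (Real.pi * |t|) * E) := by ring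
        _ ≤ (2 * (1 + |τ|)) * ((1 + |t|) / (1 + |τ|)) ^ (1 + δ) := by
          gcongr
          linarith
        _ = _ := by
          rw [Real.rpow_add (by positivity), Real.rpow_one]
          field_simp
  have b6 : (1 + |t|) * ((1 + |t|) / (1 + |τ|)) ^ δ * (1 + |τ|)⁻¹ =
      (1 + |t|) ^ (1 + δ) * (1 + |τ|) ^ (-(1 + δ)) := by
    rw [Real.div_rpow (by positivity) (by positivity), neg_add, Real.rpow_add hq,
      Real.rpow_neg_one, Real.rpow_neg hq.le, Real.rpow_add (by positivity), Real.rpow_one]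
    field_simp
  set W := w ^ (-δ)
  have hWp : 0 ≤ W := Real.rpow_nonneg hw.le _
  set A := Real.Gamma (1 - δ) ^ 2 * (Real.Gamma δ / Real.Gamma (1 - δ)) with hAdef
  have hA : 0 < A := by positivity
  calc Real.cosh (Real.pi * t) * (X1 * X2 * (X3 / Y) * W)
      ≤ Real.exp (Real.pi * |t|) * (A * B * (8 * (1 + |t| + |τ|) * E) * (3 * (1 + |τ|)⁻¹) * W) := by
        gcongr
        exact aux_cosh_le t
    _ = (24 * A * B * W * (1 + |τ|)⁻¹) * (Real.exp (Real.pi * |t|) * ((1 + |t| + |τ|) * E)) := by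
        ring
    _ ≤ (24 * A * B * W * (1 + |τ|)⁻¹) * (2 * (1 + |t|) * ((1 + |t|) / (1 + |τ|)) ^ δ) := by
        gcongr
    _ = (48 * A * B * W) * ((1 + |t|) * ((1 + |t|) / (1 + |τ|)) ^ δ * (1 + |τ|)⁻¹) := by ring
    _ = _ := by rw [b6]; ring

/-! ### Bounds for `𝓗_k` -/

theorem aux_Hmb_le (δ : ℝ) (h0 : 0 < δ) : ∃ I : ℝ, 0 < I ∧ ∀ (k : ℕ) (t c w M : ℝ),
    (∀ τ : ℝ, Real.cosh (Real.pi * t) * ‖mbIntegrand k t c w τ‖ ≤ M * (1 + |τ|) ^ (-(1 + δ))) →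
    Real.cosh (Real.pi * t) * ‖Hmb k t c w‖ ≤ I * M := by
  have hIntg : Integrable (fun τ : ℝ => (1 + |τ|) ^ (-(1 + δ))) := by
    have := integrable_one_add_norm (E := ℝ) (μ := volume) (r := 1 + δ) (by simp; exact h0)
    simpa only [Real.norm_eq_abs] using this
  have hnn : 0 ≤ ∫ τ : ℝ, (1 + |τ|) ^ (-(1 + δ)) :=
    integral_nonneg fun τ => by positivity
  refine ⟨(∫ τ : ℝ, (1 + |τ|) ^ (-(1 + δ))) + 1, by linarith, ?_⟩
  intro k t c w M hM
  have hc := Real.cosh_pos (Real.pi * t)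
  have hM0 : 0 ≤ M := by
    have := hM 0
    simp at this
    exact le_trans (by positivity) this
  have h1 : ‖∫ τ : ℝ, mbIntegrand k t c w τ‖ ≤
      ∫ τ : ℝ, (M / Real.cosh (Real.pi * t)) * (1 + |τ|) ^ (-(1 + δ)) := by
    refine norm_integral_le_of_norm_le (hIntg.const_mul _) (Filter.Eventually.of_forall fun τ => ?_)
    rw [div_mul_eq_mul_div, le_div_iff₀ hc, mul_comm]
    exact hM τ
  rw [integral_const_mul] at h1
  have h2 : ‖(1 / (2 * Real.pi) : ℂ)‖ ≤ 1 := by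
    rw [norm_div, norm_mul, Complex.norm_real, Real.norm_of_nonneg Real.pi_pos.le]
    simp only [norm_one, Complex.norm_ofNat]
    rw [div_le_one (by positivity)]
    nlinarith [Real.pi_gt_three]
  unfold Hmb
  rw [norm_mul]
  calc _ ≤ Real.cosh (Real.pi * t) * (1 * ((M / Real.cosh (Real.pi * t)) *
        ∫ τ : ℝ, (1 + |τ|) ^ (-(1 + δ)))) := by gcongr
    _ = M * ∫ τ : ℝ, (1 + |τ|) ^ (-(1 + δ)) := by field_simp
    _ ≤ _ := by nlinarith

/-- The three bounds for `cosh(πt) w^k 𝓗_k(w)`. -/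
theorem aux_G (δ : ℝ) (h0 : 0 < δ) (h1 : δ ≤ 1 / 4) : ∃ C : ℝ, 0 < C ∧
    ∀ (k : ℕ) (t c w : ℝ), 1 ≤ k → 0 < w → -(k : ℝ) < c → c < 0 →
    (Real.cosh (Real.pi * t) * w ^ k * ‖Hmb k t c w‖ ≤ C * (3 + |t|) ^ (1 + δ) * w ^ δ) ∧
    (Real.cosh (Real.pi * t) * w ^ k * ‖Hmb k t c w‖ ≤ C * (3 + |t|) ^ δ * w ^ (1 / 2 : ℝ)) ∧
    (Real.cosh (Real.pi * t) * w ^ k * ‖Hmb k t c w‖ ≤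
      C * w ^ ((k : ℝ) - δ) * ((3 + |t|) ^ 2 / 4) ^ k * ((3 + |t|)⁻¹ * (3 + |t|) ^ δ)) := by
  obtain ⟨I, hI, hH⟩ := aux_Hmb_le δ h0
  obtain ⟨CA, hCA, hA⟩ := aux_ptA δ h0 (by linarith)
  obtain ⟨CS, hCS, hS⟩ := aux_ptS δ h0 h1
  have hpi := Real.pi_pos
  refine ⟨I * (CA + 6 * Real.pi + 4 * CS), by positivity, ?_⟩
  intro k t c w hk hw hc1 hc2
  have hkr : (1:ℝ) ≤ k := by exact_mod_cast hk
  have ht : 0 ≤ |t| := abs_nonneg t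
  have hwk : (0:ℝ) < w ^ k := by positivity
  have hm1 : (1 + |t|) ^ (1 + δ) ≤ (3 + |t|) ^ (1 + δ) :=
    Real.rpow_le_rpow (by linarith) (by linarith) (by linarith)
  have hm2 : (1 + |t|) ^ δ ≤ (3 + |t|) ^ δ :=
    Real.rpow_le_rpow (by linarith) (by linarith) (by linarith)
  refine ⟨?_, ?_, ?_⟩
  · rw [aux_Hmb_indep k t c (-k + δ) w hw hc1 hc2 (by linarith) (by linarith)]
    have h := hH k t (-k + δ) w _ (fun τ => hA k t w τ hk hw)
    have e : w ^ k * w ^ (-(k : ℝ) + δ) = w ^ δ := by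
      rw [← Real.rpow_natCast, ← Real.rpow_add hw]; congr 1; ring
    calc _ = w ^ k * (Real.cosh (Real.pi * t) * ‖Hmb k t (-k + δ) w‖) := by ring
      _ ≤ w ^ k * (I * (CA * (1 + |t|) ^ (1 + δ) * w ^ (-k + δ))) := by gcongr
      _ = I * CA * (1 + |t|) ^ (1 + δ) * w ^ δ := by rw [← e]; ring
      _ ≤ I * (CA + 6 * Real.pi + 4 * CS) * (3 + |t|) ^ (1 + δ) * w ^ δ := by
        gcongr
        linarith
  · rw [aux_Hmb_indep k t c (-k + 1 / 2) w hw hc1 hc2 (by linarith) (by linarith)]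
    have h := hH k t (-k + 1 / 2) w _ (fun τ => aux_ptB δ h0 (by linarith) k t w τ hk hw)
    have e : w ^ k * w ^ (-(k : ℝ) + 1 / 2) = w ^ (1 / 2 : ℝ) := by
      rw [← Real.rpow_natCast, ← Real.rpow_add hw]; congr 1; ring
    calc _ = w ^ k * (Real.cosh (Real.pi * t) * ‖Hmb k t (-k + 1 / 2) w‖) := by ring
      _ ≤ w ^ k * (I * (6 * Real.pi * (1 + |t|) ^ δ * w ^ (-k + 1 / 2 : ℝ))) := by gcongr
      _ = I * (6 * Real.pi) * (1 + |t|) ^ δ * w ^ (1 / 2 : ℝ) := by rw [← e]; ring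
      _ ≤ I * (CA + 6 * Real.pi + 4 * CS) * (3 + |t|) ^ δ * w ^ (1 / 2 : ℝ) := by
        gcongr
        linarith
  · rw [aux_Hmb_indep k t c (-δ) w hw hc1 hc2 (by linarith) (by linarith)]
    have h := hH k t (-δ) w _ (fun τ => hS k t w τ hk hw)
    have e : w ^ k * w ^ (-δ) = w ^ ((k : ℝ) - δ) := by
      rw [← Real.rpow_natCast, ← Real.rpow_add hw, sub_eq_add_neg]
    have e2 : (3 + |t|) ^ (1 + δ) * ((3 + |t|) ^ 2 / 4) ^ (k - 1) =
        4 * (((3 + |t|) ^ 2 / 4) ^ k * ((3 + |t|)⁻¹ * (3 + |t|) ^ δ)) := by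
      obtain ⟨n, rfl⟩ : ∃ n, k = n + 1 := ⟨k - 1, by omega⟩
      rw [Nat.add_sub_cancel, pow_succ, Real.rpow_add (by positivity), Real.rpow_one]
      field_simp
      rw [pow_succ]; ring
    calc _ = w ^ k * (Real.cosh (Real.pi * t) * ‖Hmb k t (-δ) w‖) := by ring
      _ ≤ w ^ k * (I * (CS * (1 + |t|) ^ (1 + δ) * ((3 + |t|) ^ 2 / 4) ^ (k - 1) * w ^ (-δ))) := by
        gcongr
      _ = I * CS * ((1 + |t|) ^ (1 + δ) * ((3 + |t|) ^ 2 / 4) ^ (k - 1)) * w ^ ((k : ℝ) - δ) := by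
        rw [← e]; ring
      _ ≤ I * CS * ((3 + |t|) ^ (1 + δ) * ((3 + |t|) ^ 2 / 4) ^ (k - 1)) * w ^ ((k : ℝ) - δ) := by
        gcongr
      _ = I * (4 * CS) * (w ^ ((k : ℝ) - δ) * (((3 + |t|) ^ 2 / 4) ^ k * ((3 + |t|)⁻¹ * (3 + |t|) ^ δ))) := by
        rw [e2]; ring
      _ ≤ I * (CA + 6 * Real.pi + 4 * CS) * (w ^ ((k : ℝ) - δ) * (((3 + |t|) ^ 2 / 4) ^ k * ((3 + |t|)⁻¹ * (3 + |t|) ^ δ))) := by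
        gcongr
        linarith
      _ = _ := by ring

/-! ### The divisor bound -/

theorem aux_divisor (δ : ℝ) (h0 : 0 < δ) : ∃ C : ℝ, 0 < C ∧ ∀ n : ℕ, 1 ≤ n →
    (n.divisors.card : ℝ) ≤ C * (n : ℝ) ^ δ := by
  set K : ℝ := 1 + 1 / (δ * Real.log 2) with hK
  have hl2 : 0 < Real.log 2 := Real.log_pos (by norm_num)
  have hK1 : 1 ≤ K := by
    have : 0 < 1 / (δ * Real.log 2) := by positivity
    linarith
  set P : ℕ := ⌈(2:ℝ) ^ (1 / δ)⌉₊ with hP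
  refine ⟨K ^ P, by positivity, ?_⟩
  intro n hn
  have hn0 : n ≠ 0 := by omega
  rw [Nat.card_divisors hn0]
  have hfac : (n : ℝ) ^ δ = ∏ p ∈ n.primeFactors, ((p : ℝ) ^ (n.factorization p)) ^ δ := by
    rw [Real.finsetProd_rpow _ _ (fun p _ => by positivity)]
    congr 1
    have := Nat.prod_factorization_pow_eq_self hn0
    conv_lhs => rw [← this]
    rw [Finsupp.prod, Nat.support_factorization]
    push_cast
    rfl
  have hterm : ∀ p ∈ n.primeFactors, ((n.factorization p : ℝ) + 1) ≤
      (if p < P then K else 1) * ((p : ℝ) ^ (n.factorization p)) ^ δ := by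
    intro p hp
    have hpp := Nat.prime_of_mem_primeFactors hp
    have hp2 : (2:ℝ) ≤ p := by exact_mod_cast hpp.two_le
    set a := n.factorization p
    have ha : (0:ℝ) ≤ a := Nat.cast_nonneg a
    have e : ∀ x : ℝ, 0 < x → (x ^ a) ^ δ = Real.exp (a * (δ * Real.log x)) := by
      intro x hx
      rw [← Real.rpow_natCast, ← Real.rpow_mul hx.le, Real.rpow_def_of_pos hx]
      congr 1; ring
    split_ifs with hlt
    · have h1 : ((2:ℝ) ^ a) ^ δ ≤ ((p : ℝ) ^ a) ^ δ := by gcongr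
      have h2 := Real.add_one_le_exp (a * (δ * Real.log 2))
      rw [← e 2 (by norm_num)] at h2
      have h3 : (a : ℝ) + 1 ≤ K * (a * (δ * Real.log 2) + 1) := by
        have : K * (a * (δ * Real.log 2) + 1) = a * (δ * Real.log 2) + 1 + a + 1 / (δ * Real.log 2) := by
          rw [hK]; field_simp; ring
        rw [this]
        have : 0 < 1 / (δ * Real.log 2) := by positivity
        have : 0 ≤ a * (δ * Real.log 2) := by positivity
        linarith
      refine h3.trans ?_
      gcongr
      exact h2.trans h1
    · have hge : (2:ℝ) ^ (1 / δ) ≤ p := by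
        have : P ≤ p := by omega
        exact (Nat.le_ceil _).trans (by exact_mod_cast this)
      have h1 : (2:ℝ) ≤ (p : ℝ) ^ δ := by
        have := Real.rpow_le_rpow (by positivity) hge h0.le
        rwa [← Real.rpow_mul (by norm_num), one_div_mul_cancel h0.ne', Real.rpow_one] at this
      have h2 : ((p : ℝ) ^ a) ^ δ = ((p : ℝ) ^ δ) ^ a := by
        rw [← Real.rpow_natCast, ← Real.rpow_natCast, ← Real.rpow_mul (by positivity),
          ← Real.rpow_mul (by positivity), mul_comm]
      rw [one_mul, h2]
      have h3 : ((a : ℝ) + 1) ≤ (2:ℝ) ^ a := by exact_mod_cast Nat.lt_two_pow_self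
      exact h3.trans (by gcongr)
  have hprod : ((n.primeFactors.prod (n.factorization · + 1) : ℕ) : ℝ) ≤
      ∏ p ∈ n.primeFactors, ((if p < P then K else 1) * ((p : ℝ) ^ (n.factorization p)) ^ δ) := by
    push_cast
    exact Finset.prod_le_prod (fun p _ => by positivity) hterm
  refine hprod.trans ?_
  rw [Finset.prod_mul_distrib, ← hfac]
  gcongr
  rw [← Finset.prod_filter, Finset.prod_const]
  apply pow_le_pow_right₀ hK1
  calc _ ≤ (Finset.range P).card := Finset.card_le_card (by
        intro p hp
        simp only [Finset.mem_filter] at hp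
        exact Finset.mem_range.2 hp.2)
    _ = P := Finset.card_range P

theorem aux_tauC (t : ℝ) (n : ℕ) : ‖tauC (t * Complex.I) n‖ ≤ n.divisors.card := by
  unfold tauC
  refine (norm_sum_le _ _).trans ?_
  rw [Finset.card_eq_sum_ones]
  push_cast
  refine Finset.sum_le_sum fun d hd => le_of_eq ?_
  have hd' := Nat.mem_divisors.1 hd
  have hdp : 0 < d := Nat.pos_of_mem_divisors hd
  have hq : 0 < n / d := Nat.div_pos (Nat.le_of_dvd (Nat.pos_of_ne_zero hd'.2) hd'.1) hdp
  have e : ((d : ℂ) / ((n / d : ℕ) : ℂ)) = (((d : ℝ) / ((n / d : ℕ) : ℝ) : ℝ) : ℂ) := by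
    push_cast; rfl
  have hp : (0:ℝ) < (d : ℝ) / ((n / d : ℕ) : ℝ) := by
    have h1 : (0:ℝ) < d := by exact_mod_cast hdp
    have h2 : (0:ℝ) < ((n / d : ℕ) : ℝ) := by exact_mod_cast hq
    exact div_pos h1 h2
  rw [e, Complex.norm_cpow_eq_rpow_re_of_pos hp]
  simp

/-! ### Numerical lemmas -/

theorem aux_num1 (δ : ℝ) (h0 : 0 < δ) (h1 : δ ≤ 1 / 4) (C r T y G : ℝ) (k : ℕ) (hk : 2 ≤ k)
    (hC : 0 < C) (hr : 1 ≤ r) (hT : 3 ≤ T) (hy : r + 1 ≤ y)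
    (hA : G ≤ C * T ^ (1 + δ) * (r / (y - r)) ^ δ)
    (hB : G ≤ C * T ^ δ * (r / (y - r)) ^ (1 / 2 : ℝ))
    (hS : G ≤ C * (r / (y - r)) ^ ((k : ℝ) - δ) * (T ^ 2 / 4) ^ k * (T⁻¹ * T ^ δ)) :
    G ≤ C * (r * T ^ 2) ^ (3 * δ) * T⁻¹ * (2 * r * T ^ 2 / y) ^ (1 + 3 * δ) := by
  have hy0 : 0 < y := by linarith
  have hT0 : 0 < T := by linarith
  have hr0 : 0 < r := by linarith
  have hyr : 0 < y - r := by linarith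
  have hkr : (2:ℝ) ≤ k := by exact_mod_cast hk
  set q := 2 * r * T ^ 2 / y with hq
  have hq0 : 0 < q := by positivity
  have hTS : T ≤ r * T ^ 2 := by nlinarith
  have hrTS : r * T ≤ r * T ^ 2 := by nlinarith
  have hS1 : 1 ≤ r * T ^ 2 := by nlinarith
  have hTd : T ^ (3 * δ) ≤ (r * T ^ 2) ^ (3 * δ) :=
    Real.rpow_le_rpow hT0.le hTS (by linarith)
  have hTd1 : T ^ δ ≤ (r * T ^ 2) ^ (3 * δ) :=
    (Real.rpow_le_rpow_of_exponent_le (by linarith) (by linarith)).trans hTd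
  rcases le_or_gt y (2 * r) with hy2 | hy2
  · have hqT : T ^ 2 ≤ q := by
      rw [hq, le_div_iff₀ hy0]; nlinarith [sq_nonneg T]
    have hq1 : 1 ≤ q := by nlinarith
    have hw : (r / (y - r)) ^ δ ≤ r ^ δ := by
      apply Real.rpow_le_rpow (by positivity) _ h0.le
      rw [div_le_iff₀ hyr]; nlinarith
    have hqq : q ≤ q ^ (1 + 3 * δ) := by
      conv_lhs => rw [← Real.rpow_one q]
      exact Real.rpow_le_rpow_of_exponent_le hq1 (by linarith)
    have hrt : r ^ δ * T ^ δ ≤ (r * T ^ 2) ^ (3 * δ) := by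
      rw [← Real.mul_rpow hr0.le hT0.le]
      calc (r * T) ^ δ ≤ (r * T ^ 2) ^ δ := Real.rpow_le_rpow (by positivity) hrTS h0.le
        _ ≤ _ := Real.rpow_le_rpow_of_exponent_le hS1 (by linarith)
    calc G ≤ C * T ^ (1 + δ) * (r / (y - r)) ^ δ := hA
      _ ≤ C * T ^ (1 + δ) * r ^ δ := by gcongr
      _ = C * (r ^ δ * T ^ δ) * T⁻¹ * T ^ 2 := by
        rw [Real.rpow_add hT0, Real.rpow_one]; field_simp
      _ ≤ C * (r * T ^ 2) ^ (3 * δ) * T⁻¹ * q ^ (1 + 3 * δ) := by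
        gcongr
        exact hqT.trans hqq
  · have hw : r / (y - r) ≤ q / T ^ 2 := by
      rw [hq, div_le_iff₀ hyr]
      have : 2 * r * T ^ 2 / y / T ^ 2 * (y - r) = 2 * r * (y - r) / y := by field_simp
      rw [this, le_div_iff₀ hy0]
      nlinarith
    have hw0 : 0 < r / (y - r) := by positivity
    rcases le_or_gt 1 q with hq1 | hq1
    · have hqq : q ^ (1 / 2 : ℝ) ≤ q ^ (1 + 3 * δ) :=
        Real.rpow_le_rpow_of_exponent_le hq1 (by linarith)
      have e : (q / T ^ 2) ^ (1 / 2 : ℝ) = q ^ (1 / 2 : ℝ) * T⁻¹ := by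
        rw [Real.div_rpow hq0.le (by positivity), ← Real.sqrt_eq_rpow (T ^ 2),
          Real.sqrt_sq hT0.le, div_eq_mul_inv]
      calc G ≤ C * T ^ δ * (r / (y - r)) ^ (1 / 2 : ℝ) := hB
        _ ≤ C * T ^ δ * (q / T ^ 2) ^ (1 / 2 : ℝ) := by gcongr
        _ = C * T ^ δ * T⁻¹ * q ^ (1 / 2 : ℝ) := by rw [e]; ring
        _ ≤ C * (r * T ^ 2) ^ (3 * δ) * T⁻¹ * q ^ (1 + 3 * δ) := by gcongr
    · have hqq : q ^ ((k : ℝ) - δ) ≤ q ^ (1 + 3 * δ) :=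
        Real.rpow_le_rpow_of_exponent_ge hq0 hq1.le (by linarith)
      have hkd : (0:ℝ) ≤ (k : ℝ) - δ := by linarith
      have e : (q / T ^ 2) ^ ((k : ℝ) - δ) * (T ^ 2 / 4) ^ k * T ^ δ =
          q ^ ((k : ℝ) - δ) * T ^ (3 * δ) * (1 / 4) ^ k := by
        have e1 : (T ^ 2) ^ ((k : ℝ) - δ) = (T ^ 2) ^ k * (T ^ (2 * δ))⁻¹ := by
          rw [Real.rpow_sub (by positivity), Real.rpow_natCast, div_eq_mul_inv]
          congr 2
          rw [← Real.rpow_natCast T 2, ← Real.rpow_mul hT0.le]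
          norm_num
        have e2 : T ^ (3 * δ) = T ^ (2 * δ) * T ^ δ := by
          rw [← Real.rpow_add hT0]; congr 1; ring
        rw [Real.div_rpow hq0.le (by positivity), e1, e2, div_pow, one_div, inv_pow]
        have := (Real.rpow_pos_of_pos hT0 (2 * δ)).ne'
        field_simp
      have h4 : ((1:ℝ) / 4) ^ k ≤ 1 := pow_le_one₀ (by norm_num) (by norm_num)
      calc G ≤ C * (r / (y - r)) ^ ((k : ℝ) - δ) * (T ^ 2 / 4) ^ k * (T⁻¹ * T ^ δ) := hS
        _ ≤ C * (q / T ^ 2) ^ ((k : ℝ) - δ) * (T ^ 2 / 4) ^ k * (T⁻¹ * T ^ δ) := by gcongr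
        _ = C * T⁻¹ * ((q / T ^ 2) ^ ((k : ℝ) - δ) * (T ^ 2 / 4) ^ k * T ^ δ) := by ring
        _ = C * T⁻¹ * (q ^ ((k : ℝ) - δ) * T ^ (3 * δ) * (1 / 4) ^ k) := by rw [e]
        _ ≤ C * T⁻¹ * (q ^ (1 + 3 * δ) * (r * T ^ 2) ^ (3 * δ) * 1) := by gcongr
        _ = _ := by ring

theorem aux_num1' (δ : ℝ) (h0 : 0 < δ) (h1 : δ ≤ 1 / 4) (C r T N n G : ℝ)
    (hC : 0 < C) (hr : 1 ≤ r) (hT : 3 ≤ T) (hN : 1 ≤ N) (hn : 1 ≤ n)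
    (hG : G ≤ C * (r * T ^ 2) ^ (3 * δ) * T⁻¹ * (2 * r * T ^ 2 / (n * N)) ^ (1 + 3 * δ)) :
    (n * N) ^ (2 * δ) * G ≤ (8 * C * (r * T ^ 2) ^ (6 * δ) * T * (r / N)) * n ^ (-(1 + δ)) := by
  have hT0 : 0 < T := by linarith
  have hr0 : 0 < r := by linarith
  have hn0 : 0 < n := by linarith
  have hN0 : 0 < N := by linarith
  set S := r * T ^ 2 with hS
  have hS0 : 0 < S := by positivity
  have hS1 : 1 ≤ S := by nlinarith
  have hy0 : 0 < n * N := by positivity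
  set q := 2 * r * T ^ 2 / (n * N) with hq
  have hq0 : 0 < q := by positivity
  have e1 : (n * N) ^ (2 * δ) * q ^ (1 + 3 * δ) = (2 * S) ^ (2 * δ) * q ^ (1 + δ) := by
    have : (2 * S) = (n * N) * q := by rw [hq, hS]; field_simp
    rw [this, Real.mul_rpow hy0.le hq0.le, mul_assoc, ← Real.rpow_add hq0]
    congr 2; ring
  have two : ∀ a : ℝ, a ≤ 1 → (2:ℝ) ^ a ≤ 2 := fun a ha => by
    conv_rhs => rw [← Real.rpow_one 2]
    exact Real.rpow_le_rpow_of_exponent_le (by norm_num) ha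
  have e2 : (2 * S) ^ (2 * δ) ≤ 2 * S ^ (2 * δ) := by
    rw [Real.mul_rpow (by norm_num) hS0.le]
    gcongr
    exact two _ (by linarith)
  have e3 : q ^ (1 + δ) ≤ (4 * S ^ δ * (S / N)) * n ^ (-(1 + δ)) := by
    have : q = (2 * (S / N)) * n⁻¹ := by rw [hq, hS]; field_simp
    rw [this, Real.mul_rpow (by positivity) (by positivity), Real.inv_rpow hn0.le,
      ← Real.rpow_neg hn0.le]
    gcongr
    rw [Real.rpow_add (by positivity), Real.rpow_one, Real.mul_rpow (by norm_num) (by positivity)]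
    have hSN : (S / N) ^ δ ≤ S ^ δ := by
      apply Real.rpow_le_rpow (by positivity) _ h0.le
      exact div_le_self hS0.le hN
    calc 2 * (S / N) * (2 ^ δ * (S / N) ^ δ) ≤ 2 * (S / N) * (2 * S ^ δ) := by
          gcongr
          exact two _ (by linarith)
      _ = _ := by ring
  calc (n * N) ^ (2 * δ) * G ≤ (n * N) ^ (2 * δ) * (C * S ^ (3 * δ) * T⁻¹ * q ^ (1 + 3 * δ)) := by
        gcongr
    _ = C * S ^ (3 * δ) * T⁻¹ * ((2 * S) ^ (2 * δ) * q ^ (1 + δ)) := by rw [← e1]; ring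
    _ ≤ C * S ^ (3 * δ) * T⁻¹ * ((2 * S ^ (2 * δ)) * ((4 * S ^ δ * (S / N)) * n ^ (-(1 + δ)))) := by
        gcongr
    _ = 8 * C * (S ^ (3 * δ) * S ^ (2 * δ) * S ^ δ) * (T⁻¹ * (S / N)) * n ^ (-(1 + δ)) := by ring
    _ = _ := by
        rw [← Real.rpow_add hS0, ← Real.rpow_add hS0]
        have : T⁻¹ * (S / N) = T * (r / N) := by rw [hS]; field_simp
        rw [this]
        have : 3 * δ + 2 * δ + δ = 6 * δ := by ring
        rw [this]
        ring

theorem aux_num2 (δ : ℝ) (h0 : 0 < δ) (h1 : δ ≤ 1 / 4) (C r T N n G : ℝ) (k : ℕ) (hk : 2 ≤ k)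
    (hC : 0 < C) (hr : 1 ≤ r) (hT : 3 ≤ T) (hN : r < N / (1 + T ^ 2)) (hn : 1 ≤ n)
    (hS : G ≤ C * (r / (n * N - r)) ^ ((k : ℝ) - δ) * (T ^ 2 / 4) ^ k * (T⁻¹ * T ^ δ)) :
    (n * N) ^ (2 * δ) * G ≤
      (C * N ^ (4 * δ) * (r * T ^ 2 / (4 * (N - r))) ^ k * T⁻¹) * n ^ (-(1 + δ)) := by
  have hT0 : 0 < T := by linarith
  have hr0 : 0 < r := by linarith
  have hn0 : 0 < n := by linarith
  have hkr : (2:ℝ) ≤ k := by exact_mod_cast hk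
  rw [lt_div_iff₀ (by positivity)] at hN
  have hN0 : 0 < N := lt_trans (by positivity) hN
  have hNr : 0 < N - r := by nlinarith
  have hNT : T ≤ N := by nlinarith
  have hN1 : 1 ≤ N := by linarith
  have hden : n * (N - r) ≤ n * N - r := by nlinarith
  have hw : r / (n * N - r) ≤ (r / (N - r)) * n⁻¹ := by
    rw [← div_eq_mul_inv, div_div]
    apply div_le_div_of_nonneg_left hr0.le (by positivity)
    linarith
  have hden0 : 0 < n * N - r := lt_of_lt_of_le (by positivity) hden
  set v := r / (N - r) with hv
  have hv0 : 0 < v := by positivity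
  have hvd : (v ^ δ)⁻¹ ≤ N ^ δ := by
    rw [← Real.inv_rpow hv0.le]
    apply Real.rpow_le_rpow (by positivity) _ h0.le
    rw [hv, inv_div, div_le_iff₀ hr0]
    nlinarith
  have hTd : T ^ δ ≤ N ^ δ := Real.rpow_le_rpow hT0.le hNT h0.le
  have e1 : (v * n⁻¹) ^ ((k : ℝ) - δ) = v ^ k * (v ^ δ)⁻¹ * n ^ (-((k : ℝ) - δ)) := by
    rw [Real.mul_rpow hv0.le (by positivity), Real.inv_rpow hn0.le, ← Real.rpow_neg hn0.le,
      Real.rpow_sub hv0, Real.rpow_natCast, div_eq_mul_inv]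
  have e2 : n ^ (2 * δ) * n ^ (-((k : ℝ) - δ)) ≤ n ^ (-(1 + δ)) := by
    rw [← Real.rpow_add hn0]
    exact Real.rpow_le_rpow_of_exponent_le hn (by linarith)
  have e3 : v ^ k * (T ^ 2 / 4) ^ k = (r * T ^ 2 / (4 * (N - r))) ^ k := by
    rw [← mul_pow]; congr 1; rw [hv]; field_simp
  have e4 : N ^ (4 * δ) = N ^ (2 * δ) * N ^ δ * N ^ δ := by
    rw [← Real.rpow_add hN0, ← Real.rpow_add hN0]; congr 1; ring
  calc (n * N) ^ (2 * δ) * G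
      ≤ (n * N) ^ (2 * δ) * (C * (v * n⁻¹) ^ ((k : ℝ) - δ) * (T ^ 2 / 4) ^ k * (T⁻¹ * T ^ δ)) := by
        gcongr
        refine hS.trans ?_
        gcongr
        linarith
    _ = C * (v ^ k * (T ^ 2 / 4) ^ k) * T⁻¹ * N ^ (2 * δ) * (v ^ δ)⁻¹ * T ^ δ *
          (n ^ (2 * δ) * n ^ (-((k : ℝ) - δ))) := by
        rw [e1, Real.mul_rpow hn0.le hN0.le]; ring
    _ ≤ C * (v ^ k * (T ^ 2 / 4) ^ k) * T⁻¹ * N ^ (2 * δ) * N ^ δ * N ^ δ * n ^ (-(1 + δ)) := by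
        gcongr
    _ = _ := by rw [e3, e4]; ring

lemma aux_term (δ C Cd : ℝ) (h0 : 0 < δ) (hCd : 0 < Cd)
    (hdiv : ∀ n : ℕ, 1 ≤ n → (n.divisors.card : ℝ) ≤ Cd * (n : ℝ) ^ δ)
    (k N r : ℕ) (t c : ℝ) (hN : 1 ≤ N) (hr : 1 ≤ r) (K : ℝ) (hK : 0 ≤ K)
    (hb : ∀ n : ℕ, 1 ≤ n → (r : ℝ) + 1 ≤ n * N →
      ((n : ℝ) * N) ^ (2 * δ) * (Real.cosh (Real.pi * t) * ((r : ℝ) / (n * N - r)) ^ k *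
        ‖Hmb k t c ((r : ℝ) / (n * N - r))‖) ≤ K * (n : ℝ) ^ (-(1 + δ))) (n : ℕ) :
    Real.cosh (Real.pi * t) * (r : ℝ) ^ k * ‖V1term k N r t c n‖ ≤
      Cd ^ 2 * K * (n : ℝ) ^ (-(1 + δ)) := by
  unfold V1term
  split_ifs with hn
  · have h1 : 1 ≤ n := (Nat.le_add_left 1 _).trans hn
    have h2 : r + 1 < n * N := (Nat.div_lt_iff_lt_mul (by omega)).1 (by omega)
    have hm : 1 ≤ n * N - r := by omega
    have hcast : ((n * N - r : ℕ) : ℝ) = n * N - r := by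
      rw [Nat.cast_sub (by omega)]; push_cast; ring
    have h2' : (r : ℝ) + 1 ≤ n * N := by exact_mod_cast h2.le
    have hB := hb n h1 h2'
    rw [← hcast] at hB
    have hm0 : (0 : ℝ) < ((n * N - r : ℕ) : ℝ) := by exact_mod_cast hm
    have hd1 := hdiv n h1
    have hd2 := (aux_tauC t (n * N - r)).trans (hdiv _ hm)
    have hmle : ((n * N - r : ℕ) : ℝ) ≤ n * N := by
      rw [hcast]; have : (0:ℝ) ≤ r := by positivity
      linarith
    generalize hmm : n * N - r = m at *
    have hn1 : (1 : ℝ) ≤ n := by exact_mod_cast h1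
    have hN1 : (1 : ℝ) ≤ N := by exact_mod_cast hN
    have hnN : (n : ℝ) ≤ n * N := le_mul_of_one_le_right (by linarith) hN1
    have hp : (n : ℝ) ^ δ * (m : ℝ) ^ δ ≤ ((n : ℝ) * N) ^ (2 * δ) := by
      rw [two_mul, Real.rpow_add (by positivity)]
      gcongr
    rw [norm_mul, norm_div, norm_mul, Complex.cpow_natCast, norm_pow, Complex.norm_natCast,
      Complex.norm_natCast]
    have hc : 0 < Real.cosh (Real.pi * t) := Real.cosh_pos _
    calc Real.cosh (Real.pi * t) * (r : ℝ) ^ k * ((n.divisors.card : ℝ) *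
          ‖tauC (t * Complex.I) m‖ / (m : ℝ) ^ k * ‖Hmb k t c ((r : ℝ) / m)‖)
        = (n.divisors.card : ℝ) * ‖tauC (t * Complex.I) m‖ *
          (Real.cosh (Real.pi * t) * ((r : ℝ) / m) ^ k * ‖Hmb k t c ((r : ℝ) / m)‖) := by
          rw [div_pow]; field_simp
      _ ≤ (Cd * (n : ℝ) ^ δ) * (Cd * (m : ℝ) ^ δ) *
          (Real.cosh (Real.pi * t) * ((r : ℝ) / m) ^ k * ‖Hmb k t c ((r : ℝ) / m)‖) := by
          gcongr
      _ = Cd ^ 2 * (((n : ℝ) ^ δ * (m : ℝ) ^ δ) *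
          (Real.cosh (Real.pi * t) * ((r : ℝ) / m) ^ k * ‖Hmb k t c ((r : ℝ) / m)‖)) := by
          ring
      _ ≤ Cd ^ 2 * (((n : ℝ) * N) ^ (2 * δ) *
          (Real.cosh (Real.pi * t) * ((r : ℝ) / m) ^ k * ‖Hmb k t c ((r : ℝ) / m)‖)) := by
          gcongr
      _ ≤ Cd ^ 2 * (K * (n : ℝ) ^ (-(1 + δ))) := by gcongr
      _ = _ := by ring
  · rw [norm_zero, mul_zero]; positivity

lemma aux_sum (δ : ℝ) (h0 : 0 < δ) (k N r : ℕ) (t c : ℝ) (hr : 1 ≤ r) (K : ℝ)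
    (hb : ∀ n : ℕ, Real.cosh (Real.pi * t) * (r : ℝ) ^ k * ‖V1term k N r t c n‖ ≤
      K * (n : ℝ) ^ (-(1 + δ))) :
    Summable (V1term k N r t c) ∧
      ‖V1 k N r t c‖ ≤ K * ∑' n : ℕ, (n : ℝ) ^ (-(1 + δ)) := by
  have hs : Summable (fun n : ℕ => (n : ℝ) ^ (-(1 + δ))) :=
    Real.summable_nat_rpow.2 (by linarith)
  have hr0 : (0 : ℝ) < r := by exact_mod_cast hr
  have hA : 0 < Real.cosh (Real.pi * t) * (r : ℝ) ^ k :=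
    mul_pos (Real.cosh_pos _) (by positivity)
  have hs1 : Summable (fun n => Real.cosh (Real.pi * t) * (r : ℝ) ^ k * ‖V1term k N r t c n‖) :=
    Summable.of_nonneg_of_le (fun n => by positivity) hb (hs.mul_left K)
  have hs2 : Summable (fun n => ‖V1term k N r t c n‖) :=
    (summable_mul_left_iff hA.ne').1 hs1
  refine ⟨hs2.of_norm, ?_⟩
  have hnr : ‖((r : ℂ)) ^ ((k : ℂ) - t * Complex.I)‖ = (r : ℝ) ^ k := by
    rw [Complex.norm_natCast_cpow_of_pos (by omega)]
    simp
  unfold V1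
  rw [norm_mul, norm_mul, hnr, Complex.norm_real, Real.norm_of_nonneg (Real.cosh_pos _).le]
  calc _ ≤ Real.cosh (Real.pi * t) * (r : ℝ) ^ k * ∑' n, ‖V1term k N r t c n‖ := by
        gcongr
        exact norm_tsum_le_tsum_norm hs2
    _ = ∑' n, Real.cosh (Real.pi * t) * (r : ℝ) ^ k * ‖V1term k N r t c n‖ := by
        rw [tsum_mul_left]
    _ ≤ ∑' n : ℕ, K * (n : ℝ) ^ (-(1 + δ)) := hs1.tsum_le_tsum hb (hs.mul_left K)
    _ = _ := by rw [tsum_mul_left]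

/-- For every `ε > 0` there is `C_ε > 0` such that for all integers `k ≥ 2`, `N ≥ 1`, `r ≥ 1`,
all real `t` (with `T = 3 + |t|`) and any `c ∈ (-k, 0)`: the Mellin–Barnes integrals converge
absolutely, the sum defining `V_{N,1}(r)` converges absolutely, and
`|V_{N,1}(r)| ≤ C_ε (rkT²)^ε (k+T) r/N` if `r ≥ N/(1+T²)`, while
`|V_{N,1}(r)| ≤ C_ε (rT²/(4(N-r)))^k N^ε/T` if `r < N/(1+T²)`. -/
theorem V1_bound (ε : ℝ) (hε : 0 < ε) :
    ∃ C : ℝ, 0 < C ∧ ∀ (k N r : ℕ) (t c : ℝ), 2 ≤ k → 1 ≤ N → 1 ≤ r →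
      -(k : ℝ) < c → c < 0 →
      (∀ w : ℝ, 0 < w → Integrable (mbIntegrand k t c w)) ∧
      Summable (V1term k N r t c) ∧
      ((N : ℝ) / (1 + (3 + |t|) ^ 2) ≤ (r : ℝ) →
        ‖V1 k N r t c‖ ≤ C * ((r : ℝ) * k * (3 + |t|) ^ 2) ^ ε * ((k : ℝ) + (3 + |t|)) *
          ((r : ℝ) / N)) ∧
      ((r : ℝ) < (N : ℝ) / (1 + (3 + |t|) ^ 2) →
        ‖V1 k N r t c‖ ≤ C * ((r : ℝ) * (3 + |t|) ^ 2 / (4 * ((N : ℝ) - r))) ^ k *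
          ((N : ℝ) ^ ε / (3 + |t|))) := by
  set δ := min ε 1 / 8 with hδ
  have hm0 : 0 < min ε 1 := lt_min hε one_pos
  have h0 : 0 < δ := by positivity
  have h1 : δ ≤ 1 / 4 := by have := min_le_right ε 1; rw [hδ]; linarith
  have hδε : 8 * δ ≤ ε := by have := min_le_left ε 1; rw [hδ]; linarith
  obtain ⟨C, hC, hG⟩ := aux_G δ h0 h1
  obtain ⟨Cd, hCd, hdiv⟩ := aux_divisor δ h0
  set Z := ∑' n : ℕ, (n : ℝ) ^ (-(1 + δ)) with hZ
  have hZ0 : 0 ≤ Z := tsum_nonneg fun n => by positivity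
  refine ⟨8 * C * Cd ^ 2 * (Z + 1), by positivity, ?_⟩
  intro k N r t c hk hN hr hc1 hc2
  have hr1 : (1 : ℝ) ≤ r := by exact_mod_cast hr
  have hN1 : (1 : ℝ) ≤ N := by exact_mod_cast hN
  have hk1 : (1 : ℝ) ≤ k := by exact_mod_cast (by omega : 1 ≤ k)
  have hT : 3 ≤ 3 + |t| := by have := abs_nonneg t; linarith
  generalize hTT : 3 + |t| = T at *
  have hT0 : 0 < T := by linarith
  have hS1 : 1 ≤ (r : ℝ) * T ^ 2 := by nlinarith
  have hGG : ∀ n : ℕ, (r : ℝ) + 1 ≤ n * N → _ := fun n hn =>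
    hG k t c ((r : ℝ) / (n * N - r)) (by omega) (div_pos (by linarith) (by linarith)) hc1 hc2
  rw [hTT] at hGG
  have key1 := aux_sum δ h0 k N r t c hr _ (aux_term δ C Cd h0 hCd hdiv k N r t c hN hr
    (8 * C * (r * T ^ 2) ^ (6 * δ) * T * (r / N)) (by positivity) (by
      intro n hn hy
      have hn1 : (1 : ℝ) ≤ n := by exact_mod_cast hn
      obtain ⟨hA, hB, hS⟩ := hGG n hy
      exact aux_num1' δ h0 h1 C r T N n _ hC hr1 hT hN1 hn1
        (aux_num1 δ h0 h1 C r T (n * N) _ k hk hC hr1 hT hy hA hB hS)))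
  refine ⟨fun w hw => aux_mb_integrable k t c w hw hc1 hc2, key1.1, fun _ => ?_, fun hlt => ?_⟩
  · refine key1.2.trans ?_
    have e1 : ((r : ℝ) * T ^ 2) ^ (6 * δ) ≤ (r * k * T ^ 2) ^ ε := by
      calc ((r : ℝ) * T ^ 2) ^ (6 * δ) ≤ ((r : ℝ) * T ^ 2) ^ ε :=
            Real.rpow_le_rpow_of_exponent_le hS1 (by linarith)
        _ ≤ _ := by
            apply Real.rpow_le_rpow (by positivity) _ hε.le
            gcongr
            exact le_mul_of_one_le_right (by linarith) hk1
    calc Cd ^ 2 * (8 * C * (r * T ^ 2) ^ (6 * δ) * T * (r / N)) * Z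
        = 8 * C * Cd ^ 2 * Z * (r * T ^ 2) ^ (6 * δ) * T * (r / N) := by ring
      _ ≤ 8 * C * Cd ^ 2 * (Z + 1) * (r * k * T ^ 2) ^ ε * (k + T) * (r / N) := by
        gcongr <;> linarith
  · have hNr : 0 < (N : ℝ) - r := by
      have h9 : (N : ℝ) / (1 + T ^ 2) ≤ N := div_le_self (by linarith) (by nlinarith)
      linarith
    have key2 := aux_sum δ h0 k N r t c hr _ (aux_term δ C Cd h0 hCd hdiv k N r t c hN hr
      (C * N ^ (4 * δ) * (r * T ^ 2 / (4 * (N - r))) ^ k * T⁻¹) (by positivity) (by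
        intro n hn hy
        have hn1 : (1 : ℝ) ≤ n := by exact_mod_cast hn
        obtain ⟨hA, hB, hS⟩ := hGG n hy
        exact aux_num2 δ h0 h1 C r T N n _ k hk hC hr1 hT hlt hn1 hS))
    refine key2.2.trans ?_
    have e1 : (N : ℝ) ^ (4 * δ) ≤ (N : ℝ) ^ ε :=
      Real.rpow_le_rpow_of_exponent_le hN1 (by linarith)
    calc Cd ^ 2 * (C * N ^ (4 * δ) * (r * T ^ 2 / (4 * (N - r))) ^ k * T⁻¹) * Z
        = 1 * C * Cd ^ 2 * Z * (r * T ^ 2 / (4 * (N - r))) ^ k * (N ^ (4 * δ) / T) := by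
          rw [div_eq_mul_inv (_ ^ (4 * δ))]; ring
      _ ≤ 8 * C * Cd ^ 2 * (Z + 1) * (r * T ^ 2 / (4 * (N - r))) ^ k * (N ^ ε / T) := by
        gcongr <;> linarith
end
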